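/- arXiv:0906.1857 — 2 statements merged into one kernel-verified Lean document; each statement's English description precedes it below -/
import Mathlib

section
/- Let G be a Hamiltonian graph containing vertices v1, ..., vr each of degree at least r in G. Then any two vertices of G are connected by a path of length at least r. -/
open SimpleGraph

/-- `l` lists the vertices of a path of `G` from `a` to `b`. -/
def IsPathList {V : Type*} (G : SimpleGraph V) (a b : V) (l : List V) : Prop :=
  l.head? = some a ∧ l.getLast? = some b ∧ l.Nodup ∧ l.IsChain G.Adj

/-- `G` has a path from `a` to `b` with more than `r` vertices. -/
def HasLongPath {V : Type*} (G : SimpleGraph V) (a b : V) (r : ℕ) : Prop :=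
  ∃ l, IsPathList G a b l ∧ r < l.length

/-- The cyclic sequence `a, A, b, B` is a Hamilton cycle of `G`. -/
structure IsHamiltonSplit {V : Type*} (G : SimpleGraph V) (a b : V) (A B : List V) : Prop where
  mem : ∀ w, w ∈ a :: A ++ b :: B
  nodup : (a :: A ++ b :: B).Nodup
  chain_left : (a :: A ++ [b]).IsChain G.Adj
  chain_right : (b :: B ++ [a]).IsChain G.Adj

section LongPaths

variable {V : Type*} {G : SimpleGraph V} {a b : V} {r : ℕ}

theorem isChain_adj_reverse {l : List V} : l.reverse.IsChain G.Adj ↔ l.IsChain G.Adj := by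
  rw [List.isChain_reverse]
  simp only [G.adj_comm]

theorem IsPathList.reverse {l : List V} (h : IsPathList G a b l) : IsPathList G b a l.reverse := by
  obtain ⟨h1, h2, h3, h4⟩ := h
  exact ⟨by simpa using h2, by simpa using h1, by simpa using h3, isChain_adj_reverse.2 h4⟩

theorem HasLongPath.symm (h : HasLongPath G a b r) : HasLongPath G b a r := by
  obtain ⟨l, hl, hr⟩ := h
  exact ⟨l.reverse, hl.reverse, by simpa using hr⟩

theorem HasLongPath.exists_walk (h : HasLongPath G a b r) :
    ∃ p : G.Walk a b, p.IsPath ∧ r ≤ p.length := by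
  obtain ⟨l, ⟨h1, h2, h3, h4⟩, hr⟩ := h
  have hne : l ≠ [] := by rintro rfl; simp at h1
  have ha : l.head hne = a := by simpa [List.head?_eq_some_head hne] using h1
  have hb : l.getLast hne = b := by simpa [List.getLast?_eq_some_getLast hne] using h2
  refine ⟨(Walk.ofSupport l hne h4).copy ha hb, ?_, ?_⟩
  · simpa [Walk.isPath_def] using h3
  · simp only [Walk.length_copy, Walk.length_ofSupport]
    omega

theorem IsHamiltonSplit.rotate {A B : List V} (h : IsHamiltonSplit G a b A B) :
    IsHamiltonSplit G b a B A where
  mem w := by have := h.mem w; grind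
  nodup := by have := h.nodup; grind
  chain_left := h.chain_right
  chain_right := h.chain_left

theorem IsHamiltonSplit.swap {A B : List V} (h : IsHamiltonSplit G a b A B) :
    IsHamiltonSplit G a b B.reverse A.reverse where
  mem w := by have := h.mem w; grind
  nodup := by
    have := h.nodup
    simp [List.nodup_append, List.nodup_cons] at this ⊢
    grind
  chain_left := by
    have := isChain_adj_reverse.2 h.chain_right
    simpa using this
  chain_right := by
    have := isChain_adj_reverse.2 h.chain_left
    simpa using this

theorem IsHamiltonSplit.mono {A B : List V} {H : SimpleGraph V} (hGH : G ≤ H)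
    (h : IsHamiltonSplit G a b A B) : IsHamiltonSplit H a b A B where
  mem := h.mem
  nodup := h.nodup
  chain_left := h.chain_left.imp fun _ _ h => hGH h
  chain_right := h.chain_right.imp fun _ _ h => hGH h

theorem IsHamiltonSplit.hasLongPath_left {A B : List V} (h : IsHamiltonSplit G a b A B)
    (hr : r ≤ A.length + 1) : HasLongPath G a b r := by
  refine ⟨a :: A ++ [b], ⟨rfl, List.getLast?_concat .., ?_, h.chain_left⟩, by simp; omega⟩
  have := h.nodup
  grind

theorem IsHamiltonSplit.hasLongPath_of_le [Fintype V] {A B : List V}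
    (h : IsHamiltonSplit G a b A B) (hr : 2 * r ≤ Fintype.card V + 1) : HasLongPath G a b r := by
  have hcard : Fintype.card V ≤ (a :: A ++ b :: B).length := by
    classical
    rw [← List.toFinset_card_of_nodup h.nodup, ← Finset.card_univ]
    exact Finset.card_le_card fun w _ => List.mem_toFinset.2 (h.mem w)
  simp only [List.length_append, List.length_cons] at hcard
  by_cases hA : r ≤ A.length + 1
  · exact h.hasLongPath_left hA
  · exact h.swap.hasLongPath_left (by simp; omega)

theorem exists_isHamiltonSplit [DecidableEq V] {x : V} {c : G.Walk x x}
    (hc : c.IsHamiltonianCycle) (hab : a ≠ b) : ∃ A B, IsHamiltonSplit G a b A B := by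
  have ha := hc.mem_support a
  have hc' := hc.rotate ha
  generalize c.rotate a ha = d at hc'
  have hchain := d.isChain_adj_support
  have hlast : d.support.getLast? = some a := by
    rw [List.getLast?_eq_some_getLast d.support_ne_nil, d.getLast_support]
  have hnd := hc'.isCycle.support_nodup
  have hmem : ∀ w, w ∈ d.support.tail := by
    intro w
    rw [← Walk.support_tail_of_not_nil _ hc'.isCycle.not_nil]
    exact hc'.isHamiltonian_tail.mem_support w
  rw [← d.cons_tail_support] at hchain hlast
  generalize d.support.tail = t at *
  have htne : t ≠ [] := by rintro rfl; simpa using hmem a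
  obtain ⟨t, z, rfl⟩ := List.eq_nil_or_concat' t |>.resolve_left htne
  rw [← List.cons_append, List.getLast?_concat] at hlast
  obtain rfl : z = a := by simpa using hlast
  have hbt : b ∈ t := by have := hmem b; grind
  obtain ⟨A, B, rfl⟩ := List.append_of_mem hbt
  refine ⟨A, B, fun w => ?_, ?_, ?_, ?_⟩
  · have := hmem w; grind
  · grind
  · have : (z :: A ++ b :: (B ++ [z])).IsChain G.Adj := by simpa using hchain
    rw [List.isChain_split] at this
    exact this.1
  · have : (z :: A ++ b :: (B ++ [z])).IsChain G.Adj := by simpa using hchain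
    rw [List.isChain_split] at this
    exact this.2

section Closure

variable {u v : V}

/-- Reversing the segment `M` of a path list. -/
theorem IsPathList.reverse_segment {H : SimpleGraph V} {P M Q : List V} {p q : V}
    (h : IsPathList H a b (P ++ p :: (M ++ q :: Q)))
    (hP : (P ++ [p]).IsChain G.Adj) (hM : M.IsChain G.Adj) (hQ : (q :: Q).IsChain G.Adj)
    (hp : ∀ m ∈ M.getLast?, G.Adj p m) (hq : ∀ m ∈ M.head?, G.Adj m q) (hne : M ≠ []) :
    IsPathList G a b (P ++ p :: (M.reverse ++ q :: Q)) := by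
  obtain ⟨h1, h2, h3, h4⟩ := h
  refine ⟨?_, ?_, ?_, ?_⟩
  · cases P <;> simpa using h1
  · simp [List.getLast?_append, List.getLast?_cons] at h2 ⊢
    exact h2
  · refine (List.Perm.nodup_iff ?_).2 h3
    exact List.Perm.append_left _ ((List.Perm.append_right _ M.reverse_perm).cons _)
  · rw [List.isChain_split]
    refine ⟨hP, ?_⟩
    have hR := isChain_adj_reverse.2 hM
    rw [List.isChain_cons, List.isChain_append]
    refine ⟨?_, hR, hQ, ?_⟩
    · intro y hy
      apply hp
      cases M using List.reverseRecOn <;> simp_all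
    · intro y hy z hz
      simp at hy hz
      subst hz
      exact hq _ hy

theorem exists_common_or_crossing [Fintype V] [DecidableEq V] [DecidableRel G.Adj] {l : List V} (hl : l.Nodup)
    (hb : l.getLast? = some b) (h : Fintype.card V + 2 ≤ G.degree u + G.degree v) :
    (∃ w, w ∉ l ∧ G.Adj u w ∧ G.Adj v w) ∨
      ∃ X x y Y, l = X ++ x :: y :: Y ∧ G.Adj u x ∧ G.Adj v y := by
  set s := (G.neighborFinset u).map l.formPerm.toEmbedding with hs
  have h1 : s.card = G.degree u := by simp [s]
  have h2 := Finset.card_union_add_card_inter s (G.neighborFinset v)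
  have h3 := Finset.card_le_univ (s ∪ G.neighborFinset v)
  have h4 : 1 < (s ∩ G.neighborFinset v).card := by
    rw [card_neighborFinset_eq_degree] at h2
    omega
  obtain ⟨y, hy, hyb⟩ := Finset.exists_mem_ne h4 (l.formPerm b)
  simp only [hs, Finset.mem_inter, Finset.mem_map, mem_neighborFinset, Equiv.coe_toEmbedding] at hy
  obtain ⟨⟨x, hux, rfl⟩, hvy⟩ := hy
  by_cases hx : x ∈ l
  · right
    obtain ⟨X, Z, rfl⟩ := List.append_of_mem hx
    cases Z with
    | nil => simp at hb; exact absurd (by rw [hb]) hyb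
    | cons y Y =>
      refine ⟨X, x, y, Y, rfl, hux, ?_⟩
      have := List.formPerm_apply_lt_getElem _ hl X.length (by simp)
      simp at this
      rwa [this] at hvy
  · left
    rw [List.formPerm_apply_of_notMem hx] at hvy
    exact ⟨x, hx, hux, hvy⟩

theorem isChain_of_sup_edge {l : List V} (h : l.IsChain (G ⊔ edge u v).Adj)
    (huv : u ∉ l ∨ v ∉ l) : l.IsChain G.Adj := by
  refine h.imp_of_mem_imp fun x y hx hy hxy => ?_
  rw [sup_adj, edge_adj] at hxy
  grind

theorem hasLongPath_of_path_through_edge [Fintype V] [DecidableEq V] [DecidableRel G.Adj] {X Y : List V}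
    (hne : u ≠ v) (hna : ¬ G.Adj u v) (h : Fintype.card V + 2 ≤ G.degree u + G.degree v)
    (hl : IsPathList (G ⊔ edge u v) a b (X ++ u :: v :: Y))
    (hr : r < (X ++ u :: v :: Y).length) : HasLongPath G a b r := by
  have hnd := hl.2.2.1
  have hc := hl.2.2.2
  rw [List.isChain_append_cons_cons] at hc
  have hX : (X ++ [u]).IsChain G.Adj := isChain_of_sup_edge hc.1 (by grind)
  have hY : (v :: Y).IsChain G.Adj := isChain_of_sup_edge hc.2.2 (by grind)
  obtain ⟨w, hw, huw, hvw⟩ | ⟨P, x, y, Q, heq, hux, hvy⟩ :=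
    exists_common_or_crossing hnd hl.2.1 h
  · refine ⟨X ++ u :: w :: v :: Y, ⟨?_, ?_, ?_, ?_⟩, ?_⟩
    · have := hl.1
      cases X <;> simpa using this
    · have := hl.2.1
      simpa [List.getLast?_append, List.getLast?_cons] using this
    · grind
    · rw [List.isChain_append_cons_cons, List.isChain_cons_cons]
      exact ⟨hX, huw, hvw.symm, hY⟩
    · simp at hr ⊢; omega
  · have hlen := congrArg List.length heq
    have hcases : (∃ M, X ++ [u] = P ++ x :: y :: M ∧ Q = M ++ v :: Y) ∨
        (∃ M, v :: Y = M ++ x :: y :: Q ∧ P = X ++ u :: M) ∨ x = u := by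
      rw [List.append_eq_append_iff] at heq
      rcases heq with ⟨Z, rfl, hZ⟩ | ⟨Z, rfl, hZ⟩
      · cases Z with
        | nil => right; right; simp at hZ; exact hZ.1.symm
        | cons z Z => right; left; simp at hZ; exact ⟨Z, by simp [hZ.2], by simp [hZ.1]⟩
      · cases Z with
        | nil => right; right; simp at hZ; exact hZ.1
        | cons z Z =>
          left
          cases Z with
          | nil => simp at hZ; exact ⟨[], by simp [hZ.1, hZ.2.1], by simp [hZ.2.2]⟩
          | cons z' Z => simp at hZ; exact ⟨Z ++ [u], by simp [hZ], by simp [hZ]⟩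
    rcases hcases with ⟨M, hM, rfl⟩ | ⟨M, hM, rfl⟩ | rfl
    · have hl' : IsPathList (G ⊔ edge u v) a b (P ++ x :: ((y :: M) ++ v :: Y)) := by
        have := hl; rw [heq] at this; simpa using this
      rw [hM, List.isChain_append_cons_cons] at hX
      have hlast : (y :: M).getLast? = some u := by
        have := congrArg List.getLast? hM
        simpa [List.getLast?_append, List.getLast?_cons] using this.symm
      refine ⟨_, hl'.reverse_segment hX.1 hX.2.2 hY ?_ ?_ (by simp), ?_⟩
      · intro m hm
        rw [hlast] at hm
        simp at hm
        subst hm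
        exact hux.symm
      · simpa using hvy.symm
      · simp at hr hlen ⊢; omega
    · have hl' : IsPathList (G ⊔ edge u v) a b (X ++ u :: ((M ++ [x]) ++ y :: Q)) := by
        have := hl; rw [heq] at this; simpa using this
      rw [hM, List.isChain_append_cons_cons] at hY
      have hhead : (M ++ [x]).head? = some v := by
        have := congrArg List.head? hM
        cases M <;> simp_all
      refine ⟨_, hl'.reverse_segment hX hY.1 hY.2.2 ?_ ?_ (by simp), ?_⟩
      · simpa using hux
      · intro m hm
        rw [hhead] at hm
        simp at hm
        subst hm
        exact hvy
      · simp at hr hlen ⊢; omega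
    · exact absurd hux (G.loopless.irrefl _)

/-- Joining two nonadjacent vertices of large degree sum creates no longer paths from `a` to `b`. -/
theorem HasLongPath.of_sup_edge [Fintype V] [DecidableEq V] [DecidableRel G.Adj]
    (hne : u ≠ v) (hna : ¬ G.Adj u v) (h : Fintype.card V + 2 ≤ G.degree u + G.degree v)
    (hl : HasLongPath (G ⊔ edge u v) a b r) : HasLongPath G a b r := by
  obtain ⟨l, hl, hr⟩ := hl
  by_cases hG : l.IsChain G.Adj
  · exact ⟨l, ⟨hl.1, hl.2.1, hl.2.2.1, hG⟩, hr⟩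
  rw [List.isChain_iff_forall_rel_of_append_cons_cons] at hG
  push Not at hG
  obtain ⟨x, y, X, Y, rfl, hxy⟩ := hG
  have hadj := (List.isChain_append_cons_cons.1 hl.2.2.2).2.1
  rw [sup_adj, edge_adj] at hadj
  rcases hadj.resolve_left hxy with ⟨⟨rfl, rfl⟩ | ⟨rfl, rfl⟩, -⟩
  · exact hasLongPath_of_path_through_edge hne hna h hl hr
  · rw [edge_comm] at hl
    exact hasLongPath_of_path_through_edge hne.symm hxy (by omega) hl hr

end Closure

section Clique

theorem exists_first_mem {S : Finset V} {l : List V} (h : ∃ w ∈ l, w ∈ S) :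
    ∃ P s R, l = P ++ s :: R ∧ s ∈ S ∧ ∀ w ∈ P, w ∉ S := by
  induction l with
  | nil => simp at h
  | cons x l ih =>
    by_cases hx : x ∈ S
    · exact ⟨[], x, l, rfl, hx, by simp⟩
    · obtain ⟨P, s, R, rfl, hs, hP⟩ := ih (by grind)
      exact ⟨x :: P, s, R, rfl, hs, by grind⟩

theorem exists_last_mem {S : Finset V} {l : List V} (h : ∃ w ∈ l, w ∈ S) :
    ∃ R s P, l = R ++ s :: P ∧ s ∈ S ∧ ∀ w ∈ P, w ∉ S := by
  obtain ⟨P, s, R, hl, hs, hP⟩ := exists_first_mem (S := S) (l := l.reverse) (by simpa using h)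
  refine ⟨R.reverse, s, P.reverse, ?_, hs, by simpa using hP⟩
  have := congrArg List.reverse hl
  simpa using this

theorem isChain_of_isClique {S : Finset V} (hS : G.IsClique S) {l : List V} (hl : l.Nodup)
    (h : ∀ w ∈ l, w ∈ S) : l.IsChain G.Adj :=
  (hl.imp_of_mem fun hx hy hxy => hS (h _ hx) (h _ hy) hxy).isChain

/-- Joining the ends of two disjoint paths through all of a clique. -/
theorem hasLongPath_join [DecidableEq V] {S : Finset V} (hS : G.IsClique S) (hr : r ≤ S.card)
    {s t : V} {P Q : List V} (hs : s ∈ S) (ht : t ∈ S) (hst : s ≠ t)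
    (hP : (P ++ [s]).IsChain G.Adj) (hQ : (t :: Q).IsChain G.Adj) (hnd : (P ++ Q).Nodup)
    (hPS : ∀ w ∈ P, w ∉ S) (hQS : ∀ w ∈ Q, w ∉ S) (ha : (P ++ [s]).head? = some a)
    (hb : (t :: Q).getLast? = some b) (hlen : 1 ≤ P.length + Q.length) : HasLongPath G a b r := by
  set M := (S \ {s, t}).toList with hM
  have hMS : ∀ w, w ∈ M ↔ w ∈ S ∧ w ≠ s ∧ w ≠ t := by simp [M]
  have hMnd : M.Nodup := Finset.nodup_toList _
  have hMlen : M.length + 2 = S.card := by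
    rw [hM, Finset.length_toList, ← Finset.card_pair hst]
    exact Finset.card_sdiff_add_card_eq_card (by grind)
  refine ⟨P ++ s :: (M ++ t :: Q), ⟨?_, ?_, ?_, ?_⟩, ?_⟩
  · cases P <;> simpa using ha
  · simp [List.getLast?_append, List.getLast?_cons] at hb ⊢
    exact hb
  · simp [List.nodup_append, List.nodup_cons] at hnd ⊢
    grind
  · rw [List.isChain_split]
    refine ⟨hP, ?_⟩
    rw [← List.cons_append, List.isChain_split]
    refine ⟨isChain_of_isClique hS ?_ ?_, hQ⟩
    · simp [List.nodup_append, List.nodup_cons]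
      grind
    · grind
  · simp; omega

/-- Two vertices of a clique are joined by a path through the whole clique that also traverses a
given path `D` between two clique vertices. -/
theorem hasLongPath_insert [DecidableEq V] {S : Finset V} (hS : G.IsClique S) (hr : r ≤ S.card)
    {p q : V} {D : List V} (ha : a ∈ S) (hb : b ∈ S) (hab : a ≠ b) (hp : p ∈ S) (hq : q ∈ S)
    (hpq : p ≠ q) (hpb : p ≠ b) (hqa : q ≠ a) (hqb : q ≠ b)
    (hD : (p :: D ++ [q]).IsChain G.Adj) (hnd : D.Nodup) (hDS : ∀ w ∈ D, w ∉ S)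
    (hne : D ≠ []) : HasLongPath G a b r := by
  have hlen : 1 ≤ D.length := List.length_pos_iff.2 hne
  set M := (S \ {a, b, p, q}).toList with hM
  have hMS : ∀ w, w ∈ M ↔ w ∈ S ∧ w ≠ a ∧ w ≠ b ∧ w ≠ p ∧ w ≠ q := by simp [M]
  have hMnd : M.Nodup := Finset.nodup_toList _
  have hMcard : M.length + ({a, b, p, q} : Finset V).card = S.card := by
    rw [hM, Finset.length_toList]
    exact Finset.card_sdiff_add_card_eq_card (by grind)
  by_cases hpa : p = a
  · subst hpa
    have h3 : ({p, b, p, q} : Finset V).card ≤ 3 := by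
      rw [Finset.insert_eq_of_mem (by simp)]
      exact Finset.card_le_three
    refine ⟨p :: D ++ q :: (M ++ [b]), ⟨rfl, ?_, ?_, ?_⟩, ?_⟩
    · simp [List.getLast?_append, List.getLast?_cons]
    · simp [List.nodup_append, List.nodup_cons]
      grind
    · rw [List.isChain_split]
      refine ⟨hD, isChain_of_isClique hS ?_ ?_⟩
      · simp [List.nodup_append, List.nodup_cons]
        grind
      · grind
    · simp; omega
  · have h4 : ({a, b, p, q} : Finset V).card ≤ 4 := Finset.card_le_four
    refine ⟨a :: M ++ p :: (D ++ q :: [b]), ⟨rfl, ?_, ?_, ?_⟩, ?_⟩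
    · simp [List.getLast?_append, List.getLast?_cons]
    · simp [List.nodup_append, List.nodup_cons]
      grind
    · rw [List.isChain_split]
      refine ⟨isChain_of_isClique hS ?_ ?_, ?_⟩
      · simp [List.nodup_append, List.nodup_cons]
        grind
      · grind
      · rw [← List.cons_append, List.isChain_split]
        refine ⟨hD, isChain_of_isClique hS ?_ ?_⟩
        · simp [hqb]
        · grind
    · simp; omega

variable {S : Finset V} {A B : List V}

theorem IsHamiltonSplit.hasLongPath_of_adj_aux [DecidableEq V] (h : IsHamiltonSplit G a b A B)
    (hS : G.IsClique S) (hr : r ≤ S.card) (ha : a ∈ S) (hb : b ∈ S) (hab : a ≠ b)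
    {X Y : List V} {y w : V} (hA : A = X ++ y :: Y) (hy : y ∉ S) (hw : w ∈ S) (hwa : w ≠ a)
    (hwb : w ≠ b) (hwX : w ∉ X) (hyw : G.Adj y w) : HasLongPath G a b r := by
  obtain ⟨R, u, P, hl, hu, hP⟩ := exists_last_mem (S := S) (l := a :: X) ⟨a, by simp, ha⟩
  have hnd := h.nodup
  have hch := h.chain_left
  subst hA
  have e1 : a :: (X ++ y :: Y) = R ++ u :: (P ++ y :: Y) := by
    rw [← List.cons_append, hl]; simp
  have hch' : (u :: P ++ [y]).IsChain G.Adj := by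
    rw [e1] at hch
    have e2 : R ++ u :: (P ++ y :: Y) ++ [b] = R ++ ((u :: P ++ [y]) ++ (Y ++ [b])) := by simp
    rw [e2] at hch
    exact hch.right_of_append.left_of_append
  have hnd' : (R ++ u :: (P ++ y :: Y) ++ b :: B).Nodup := by rw [← e1]; exact hnd
  have hwu : u ≠ w := by
    rintro rfl
    have : u ∈ a :: X := by rw [hl]; simp
    grind
  refine hasLongPath_insert (p := u) (q := w) (D := P ++ [y]) hS hr ha hb hab hu hw hwu ?_ hwa hwb
    ?_ ?_ ?_ (by simp)
  · rintro rfl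
    simp [List.nodup_append, List.nodup_cons] at hnd'
  · have : (u :: P ++ y :: [w]).IsChain G.Adj := by
      rw [List.isChain_split]
      exact ⟨hch', by simpa using hyw⟩
    simpa using this
  · simp [List.nodup_append, List.nodup_cons] at hnd' ⊢
    grind
  · grind

theorem IsHamiltonSplit.hasLongPath_of_adj_left [DecidableEq V] (h : IsHamiltonSplit G a b A B)
    (hS : G.IsClique S) (hr : r ≤ S.card) (ha : a ∈ S) (hb : b ∈ S) (hab : a ≠ b)
    {y w : V} (hyA : y ∈ A) (hy : y ∉ S) (hw : w ∈ S) (hwa : w ≠ a)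
    (hwb : w ≠ b) (hyw : G.Adj y w) : HasLongPath G a b r := by
  obtain ⟨X, Y, hA⟩ := List.append_of_mem hyA
  by_cases hwX : w ∈ X
  · have hwY : w ∉ Y.reverse := by
      have := h.nodup
      subst hA
      simp [List.nodup_append, List.nodup_cons] at this ⊢
      grind
    exact (h.rotate.swap.hasLongPath_of_adj_aux hS hr hb ha hab.symm (X := Y.reverse)
      (Y := X.reverse) (by simp [hA]) hy hw hwb hwa hwY hyw).symm
  · exact h.hasLongPath_of_adj_aux hS hr ha hb hab hA hy hw hwa hwb hwX hyw

theorem IsHamiltonSplit.hasLongPath_of_adj [DecidableEq V] (h : IsHamiltonSplit G a b A B)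
    (hS : G.IsClique S) (hr : r ≤ S.card) (ha : a ∈ S) (hb : b ∈ S) (hab : a ≠ b)
    {y w : V} (hy : y ∉ S) (hw : w ∈ S) (hwa : w ≠ a)
    (hwb : w ≠ b) (hyw : G.Adj y w) : HasLongPath G a b r := by
  have : y ∈ A ∨ y ∈ B.reverse := by have := h.mem y; grind
  rcases this with hyA | hyB
  · exact h.hasLongPath_of_adj_left hS hr ha hb hab hyA hy hw hwa hwb hyw
  · exact h.swap.hasLongPath_of_adj_left hS hr ha hb hab hyB hy hw hwa hwb hyw

theorem IsHamiltonSplit.hasLongPath_of_notMem_of_mem [DecidableEq V]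
    (h : IsHamiltonSplit G a b A B) (hS : G.IsClique S) (hr : r ≤ S.card) (ha : a ∉ S)
    (hb : b ∈ S) (hA : ∃ w ∈ A, w ∈ S) : HasLongPath G a b r := by
  obtain ⟨P, s, R, rfl, hs, hP⟩ := exists_first_mem hA
  have hnd := h.nodup
  have hch := h.chain_left
  have e : a :: (P ++ s :: R) ++ [b] = (a :: P ++ [s]) ++ (R ++ [b]) := by simp
  rw [e] at hch
  simp [List.nodup_append, List.nodup_cons] at hnd
  refine hasLongPath_join (s := s) (t := b) (P := a :: P) (Q := []) hS hr hs hb ?_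
    hch.left_of_append (by simp) ?_ ?_ (by simp) rfl rfl (by simp)
  · grind
  · simp [List.nodup_cons]
    grind
  · grind

theorem IsHamiltonSplit.hasLongPath_of_both [DecidableEq V]
    (h : IsHamiltonSplit G a b A B) (hS : G.IsClique S) (hr : r ≤ S.card) (ha : a ∉ S)
    (hb : b ∉ S) (hA : ∃ w ∈ A, w ∈ S) (hB : ∃ w ∈ B, w ∈ S) : HasLongPath G a b r := by
  obtain ⟨P, s, R, rfl, hs, hP⟩ := exists_first_mem hA
  obtain ⟨Q, t, T, rfl, ht, hQ⟩ := exists_first_mem hB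
  have hnd := h.nodup
  have hch := h.chain_left
  have hch' := h.chain_right
  have e : a :: (P ++ s :: R) ++ [b] = (a :: P ++ [s]) ++ (R ++ [b]) := by simp
  have e' : b :: (Q ++ t :: T) ++ [a] = (b :: Q ++ [t]) ++ (T ++ [a]) := by simp
  rw [e] at hch
  rw [e'] at hch'
  have hQt := isChain_adj_reverse.2 hch'.left_of_append
  simp [List.nodup_append, List.nodup_cons] at hnd
  refine hasLongPath_join (s := s) (t := t) (P := a :: P) (Q := (b :: Q).reverse) hS hr hs ht ?_
    hch.left_of_append (by simpa using hQt) ?_ ?_ ?_ rfl ?_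
    (by simp only [List.length_cons]; omega)
  · grind
  · simp [List.nodup_append, List.nodup_cons]
    grind
  · grind
  · grind
  · simp [List.getLast?_cons]

theorem IsHamiltonSplit.hasLongPath_of_subset [DecidableEq V]
    (h : IsHamiltonSplit G a b A B) (hS : G.IsClique S) (hr : r ≤ S.card) (hcard : 2 ≤ S.card)
    (hA : ∀ w ∈ S, w ∈ A) : HasLongPath G a b r := by
  obtain ⟨x, hx, z, hz, hxz⟩ := Finset.one_lt_card.1 hcard
  obtain ⟨P, s, R, rfl, hs, hP⟩ := exists_first_mem ⟨x, hA x hx, hx⟩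
  have hR : ∃ w ∈ R, w ∈ S := by
    have h1 := hA x hx
    have h2 := hA z hz
    grind
  obtain ⟨T, t, Q, rfl, ht, hQ⟩ := exists_last_mem hR
  have hnd := h.nodup
  have hch := h.chain_left
  have e : a :: (P ++ s :: (T ++ t :: Q)) ++ [b] = (a :: P ++ [s]) ++ (T ++ t :: (Q ++ [b])) := by
    simp
  rw [e] at hch
  have haS : a ∉ S := fun ha => by have := hA a ha; grind
  have hbS : b ∉ S := fun hb => by
    have := hA b hb
    simp [List.nodup_append, List.nodup_cons] at hnd
    grind
  simp [List.nodup_append, List.nodup_cons] at hnd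
  refine hasLongPath_join (s := s) (t := t) (P := a :: P) (Q := Q ++ [b]) hS hr hs ht ?_
    hch.left_of_append hch.right_of_append.right_of_append ?_ ?_ ?_ rfl
    (List.getLast?_concat (l := t :: Q) ..) (by simp only [List.length_cons]; omega)
  · grind
  · simp [List.nodup_append, List.nodup_cons]
    grind
  · grind
  · grind

theorem IsHamiltonSplit.hasLongPath_of_isClique [DecidableEq V]
    (h : IsHamiltonSplit G a b A B) (hS : G.IsClique S) (hr : r ≤ S.card) (hcard : 3 ≤ S.card)
    (hout : ∀ w ∈ S, ∃ y, y ∉ S ∧ G.Adj y w) (hab : a ≠ b) : HasLongPath G a b r := by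
  have key : ∀ {a b : V} {A B : List V}, IsHamiltonSplit G a b A B → a ∉ S → b ∈ S →
      HasLongPath G a b r := by
    intro a b A B h ha hb
    obtain ⟨z, hz, hzb⟩ := Finset.exists_mem_ne (by omega : 1 < S.card) b
    have : z ∈ A ∨ z ∈ B.reverse := by have := h.mem z; grind
    rcases this with hzA | hzB
    · exact h.hasLongPath_of_notMem_of_mem hS hr ha hb ⟨z, hzA, hz⟩
    · exact h.swap.hasLongPath_of_notMem_of_mem hS hr ha hb ⟨z, hzB, hz⟩
  by_cases ha : a ∈ S <;> by_cases hb : b ∈ S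
  · obtain ⟨w, hw⟩ : (S \ {a, b}).Nonempty := by
      rw [← Finset.card_pos]
      have := Finset.le_card_sdiff {a, b} S
      have := Finset.card_le_two (a := a) (b := b)
      omega
    simp only [Finset.mem_sdiff, Finset.mem_insert, Finset.mem_singleton, not_or] at hw
    obtain ⟨y, hy, hyw⟩ := hout w hw.1
    exact h.hasLongPath_of_adj hS hr ha hb hab hy hw.1 hw.2.1 hw.2.2 hyw
  · exact (key h.rotate hb ha).symm
  · exact key h ha hb
  · by_cases hA : ∃ w ∈ A, w ∈ S
    · by_cases hB : ∃ w ∈ B, w ∈ S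
      · exact h.hasLongPath_of_both hS hr ha hb hA hB
      · refine h.hasLongPath_of_subset hS hr (by omega) fun w hw => ?_
        have := h.mem w
        grind
    · refine h.swap.hasLongPath_of_subset hS hr (by omega) fun w hw => ?_
      have := h.mem w
      grind

end Clique

theorem IsHamiltonSplit.hasLongPath_of_degree [Fintype V] [DecidableEq V] {A B : List V}
    (S : Finset V) (hS : S.card = r) (hab : a ≠ b) (h2 : Fintype.card V + 2 ≤ 2 * r)
    (hG : ∀ v ∈ S, r ≤ (G.neighborSet v).ncard) (h : IsHamiltonSplit G a b A B) :
    HasLongPath G a b r := by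
  classical
  simp only [Set.ncard_eq_toFinset_card', Set.toFinset_card, card_neighborSet_eq_degree] at hG
  induction G using WellFoundedGT.induction with
  | _ G ih =>
  by_cases hcl : G.IsClique S
  · have hout : ∀ w ∈ S, ∃ y, y ∉ S ∧ G.Adj y w := by
      intro w hw
      by_contra! hno
      have hsub : G.neighborFinset w ⊆ S.erase w := by
        intro y hy
        rw [mem_neighborFinset] at hy
        rw [Finset.mem_erase]
        exact ⟨hy.ne', by_contra fun hyS => hno y hyS hy.symm⟩
      have h1 := Finset.card_le_card hsub
      rw [card_neighborFinset_eq_degree, Finset.card_erase_of_mem hw] at h1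
      have h2 := hG w hw
      have := Finset.card_pos.2 ⟨w, hw⟩
      omega
    obtain ⟨w, hw⟩ : S.Nonempty := Finset.card_pos.1 (by omega)
    have := hG w hw
    have := G.degree_lt_card_verts w
    exact h.hasLongPath_of_isClique hcl hS.ge (by omega) hout hab
  · simp only [isClique_iff, Set.Pairwise] at hcl
    push Not at hcl
    obtain ⟨u, hu, v, hv, huv, hna⟩ := hcl
    have hlt : G < G ⊔ edge u v := G.lt_sup_edge u v huv hna
    have hdu := hG u hu
    have hdv := hG v hv
    refine HasLongPath.of_sup_edge huv hna (by omega) (ih _ hlt (h.mono hlt.le) fun w hw => ?_)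
    refine (hG w hw).trans (Finset.card_le_card fun y hy => ?_)
    rw [mem_neighborFinset] at hy ⊢
    exact hlt.le hy

end LongPaths

/-- in a Hamiltonian graph containing `r` distinct vertices each of
degree at least `r`, any two vertices are connected by a path of length at least `r`. -/
theorem stmt13 {V : Type*} [Fintype V] [DecidableEq V] (G : SimpleGraph V) [DecidableRel G.Adj]
    (r : ℕ) (x : V) (c : G.Walk x x) (hc : c.IsHamiltonianCycle)
    (v : Fin r → V) (hv : Function.Injective v)
    (hdeg : ∀ i, r ≤ G.degree (v i)) :
    ∀ a b : V, a ≠ b → ∃ p : G.Walk a b, p.IsPath ∧ r ≤ p.length := by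
  intro a b hab
  apply HasLongPath.exists_walk
  obtain ⟨A, B, h⟩ := exists_isHamiltonSplit hc hab
  rcases Nat.lt_or_ge (Fintype.card V + 1) (2 * r) with h2 | h2
  · refine h.hasLongPath_of_degree (Finset.univ.image v) ?_ hab h2 ?_
    · simp [Finset.card_image_of_injective _ hv]
    · intro w hw
      obtain ⟨i, -, rfl⟩ := Finset.mem_image.1 hw
      rw [Set.ncard_eq_toFinset_card', Set.toFinset_card, card_neighborSet_eq_degree]
      exact hdeg i
  · exact h.hasLongPath_of_le h2
end

section
/- Every 4-connected finite graph G either has a cycle of length at least 4δ − 2κ or has a dominating cycle, where δ is the minimum degree and κ the connectivity of G. -/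
open SimpleGraph

variable {V : Type*}

/-- `S` is a cut-set: removing `S` leaves a disconnected or trivial graph. -/
def IsCutSet (G : SimpleGraph V) (S : Set V) : Prop :=
  ¬ (G.induce Sᶜ).Connected ∨ Sᶜ.Subsingleton

/-- The connectivity `κ` of `G`: the minimum number of vertices whose removal
disconnects or trivializes `G`. -/
noncomputable def kappa (G : SimpleGraph V) : ℕ :=
  sInf {k | ∃ S : Set V, S.ncard = k ∧ IsCutSet G S}

/-- `G` has a dominating cycle: a cycle `C` such that the vertices outside `C`
form an independent set. -/
def HasDominatingCycle (G : SimpleGraph V) : Prop :=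
  ∃ (x : V) (C : G.Walk x x), C.IsCycle ∧
    ∀ a b : V, a ∉ C.support → b ∉ C.support → ¬ G.Adj a b

/-! ### Paths inside a vertex set -/

/-- There is a path of length `n` from `x` to `z` all of whose vertices lie in `B`. -/
def PathIn (G : SimpleGraph V) (B : Finset V) (x z : V) (n : ℕ) : Prop :=
  ∃ p : G.Walk x z, p.IsPath ∧ p.length = n ∧ ∀ v ∈ p.support, v ∈ B

namespace PathIn

variable {G : SimpleGraph V} {B D : Finset V} {u v w x z : V} {m n : ℕ}

lemma mono (h : PathIn G B x z n) (hBD : B ⊆ D) : PathIn G D x z n := by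
  obtain ⟨p, hp, hl, hs⟩ := h
  exact ⟨p, hp, hl, fun v hv => hBD (hs v hv)⟩

lemma left_mem (h : PathIn G B x z n) : x ∈ B := by
  obtain ⟨p, -, -, hs⟩ := h
  exact hs x p.start_mem_support

lemma nil (hx : x ∈ B) : PathIn G B x x 0 :=
  ⟨Walk.nil, Walk.IsPath.nil, rfl, by simpa using hx⟩

lemma symm (h : PathIn G B x z n) : PathIn G B z x n := by
  obtain ⟨p, hp, hl, hs⟩ := h
  exact ⟨p.reverse, hp.reverse, by simpa using hl, by simpa using hs⟩

section
open scoped Classical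

lemma edge (h : G.Adj u v) : PathIn G {u, v} u v 1 :=
  ⟨h.toWalk, h.isPath_toWalk, by simp, by simp⟩

lemma append (h₁ : PathIn G B u v n) (h₂ : PathIn G D v w m)
    (h : ∀ y ∈ B, y ∈ D → y = v) : PathIn G (B ∪ D) u w (n + m) := by
  obtain ⟨p, hp, hl, hs⟩ := h₁
  obtain ⟨q, hq, hl', hs'⟩ := h₂
  refine ⟨p.append q, ?_, by simp [hl, hl'], ?_⟩
  · rw [Walk.isPath_def, Walk.support_append, List.nodup_append']
    refine ⟨hp.support_nodup, hq.support_nodup.tail, ?_⟩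
    intro y hy hy'
    have hyv := h y (hs y hy) (hs' y (List.mem_of_mem_tail hy'))
    subst hyv
    have := hq.support_nodup
    rw [← q.cons_tail_support] at this
    exact (List.nodup_cons.1 this).1 hy'
  · intro y hy
    rw [Walk.mem_support_append_iff] at hy
    simp only [Finset.mem_union]
    exact hy.imp (hs y) (hs' y)

lemma cons (h : G.Adj u v) (h₂ : PathIn G B v w n) (hu : u ∉ B) :
    PathIn G (insert u B) u w (n + 1) := by
  have := (edge h).append h₂ (by
    intro y hy hyB
    simp only [Finset.mem_insert, Finset.mem_singleton] at hy
    rcases hy with rfl | rfl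
    · exact absurd hyB hu
    · rfl)
  rw [add_comm]
  refine this.mono ?_
  intro y hy
  have := h₂.left_mem
  simp only [Finset.mem_union, Finset.mem_insert, Finset.mem_singleton] at hy ⊢
  rcases hy with (rfl | rfl) | h <;> tauto

/-- Two paths with the same ends that are otherwise disjoint close up to a cycle. -/
lemma exists_cycle (h₁ : PathIn G B u v n) (h₂ : PathIn G D v u m) (huv : u ≠ v)
    (h : ∀ y ∈ B, y ∈ D → y = u ∨ y = v) (hnm : 3 ≤ n + m) :
    ∃ (y : V) (C : G.Walk y y), C.IsCycle ∧ C.length = n + m := by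
  obtain ⟨p, hp, hl, hs⟩ := h₁
  obtain ⟨q, hq, hl', hs'⟩ := h₂
  refine ⟨u, p.append q, hp.isCycle_append hq ?_ (by omega), by simp [hl, hl']⟩
  intro y hy hy'
  have h1 := hp.support_nodup
  rw [← p.cons_tail_support] at h1
  have h2 := hq.support_nodup
  rw [← q.cons_tail_support] at h2
  rcases h y (hs y (List.mem_of_mem_tail hy)) (hs' y (List.mem_of_mem_tail hy')) with rfl | rfl
  · exact (List.nodup_cons.1 h1).1 hy
  · exact (List.nodup_cons.1 h2).1 hy'

end

end PathIn

section
open scoped Classical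

set_option linter.unusedSectionVars false

variable [Fintype V]

/-- The vertices reachable from `u` by a walk inside `B`. -/
noncomputable def reach (G : SimpleGraph V) (B : Finset V) (u : V) : Finset V :=
  Finset.univ.filter fun v => ∃ p : G.Walk u v, ∀ w ∈ p.support, w ∈ B

/-- The vertices of `B` outside `T` with a neighbour in `T`. -/
noncomputable def bd (G : SimpleGraph V) (B T : Finset V) : Finset V :=
  (B \ T).filter fun v => ∃ t ∈ T, G.Adj t v

variable {G : SimpleGraph V} {B D T : Finset V} {u v w x z : V}

lemma mem_reach : v ∈ reach G B u ↔ ∃ p : G.Walk u v, ∀ w ∈ p.support, w ∈ B := by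
  simp [reach]

lemma mem_bd : v ∈ bd G B T ↔ v ∈ B ∧ v ∉ T ∧ ∃ t ∈ T, G.Adj t v := by
  simp [bd, and_assoc]

lemma self_mem_reach (hu : u ∈ B) : u ∈ reach G B u :=
  mem_reach.2 ⟨Walk.nil, by simpa using hu⟩

lemma reach_subset : reach G B u ⊆ B := fun v hv => by
  obtain ⟨p, hp⟩ := mem_reach.1 hv
  exact hp v p.end_mem_support

lemma mem_reach_of_adj (hv : v ∈ reach G B u) (h : G.Adj v w) (hw : w ∈ B) :
    w ∈ reach G B u := by
  obtain ⟨p, hp⟩ := mem_reach.1 hv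
  refine mem_reach.2 ⟨p.concat h, ?_⟩
  intro y hy
  rw [Walk.support_concat] at hy
  simp only [List.mem_append, List.mem_singleton] at hy
  rcases hy with hy | rfl
  · exact hp y hy
  · exact hw

lemma exists_pathIn_reach (hv : v ∈ reach G B u) (hw : w ∈ reach G B u) :
    ∃ n, PathIn G (reach G B u) v w n := by
  obtain ⟨p, hp⟩ := mem_reach.1 hv
  obtain ⟨q, hq⟩ := mem_reach.1 hw
  have key : ∀ {v} (p : G.Walk u v), (∀ w ∈ p.support, w ∈ B) →
      ∀ w ∈ p.support, w ∈ reach G B u := by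
    intro v p hp w hw
    exact mem_reach.2
      ⟨p.takeUntil w hw, fun y hy => hp y (p.support_takeUntil_subset_support hw hy)⟩
  refine ⟨_, (p.reverse.append q).bypass, Walk.bypass_isPath _, rfl, ?_⟩
  intro y hy
  have hy := Walk.support_bypass_subset_support _ hy
  rw [Walk.mem_support_append_iff, Walk.support_reverse, List.mem_reverse] at hy
  exact hy.elim (key p hp y) (key q hq y)

lemma bd_reach_subset : bd G B (reach G D u) ⊆ B \ D := by
  intro y hy
  obtain ⟨h1, h2, t, ht, hty⟩ := mem_bd.1 hy
  exact Finset.mem_sdiff.2 ⟨h1, fun hD => h2 (mem_reach_of_adj ht hty hD)⟩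

end

/-! ### Long paths with prescribed ends -/

section
open scoped Classical

set_option linter.unusedSectionVars false

variable [Fintype V] {G : SimpleGraph V}

lemma exists_min_card {P : Finset V → Prop} (h : ∃ U, P U) :
    ∃ U, P U ∧ ∀ T, P T → U.card ≤ T.card := by
  obtain ⟨U₀, h₀⟩ := h
  obtain ⟨U, hU, hmin⟩ := Finset.exists_min_image (Finset.univ.filter P) Finset.card
    ⟨U₀, by simpa using h₀⟩
  exact ⟨U, by simpa using hU, fun T hT => hmin T (by simpa using hT)⟩

/-- The neighbours of `v` in `B`. -/
noncomputable def nbr (G : SimpleGraph V) (B : Finset V) (v : V) : Finset V :=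
  B.filter (G.Adj v)

lemma mem_nbr {B : Finset V} {v w : V} : w ∈ nbr G B v ↔ w ∈ B ∧ G.Adj v w := by
  simp [nbr]

/-- Every nonempty subset of `B` avoiding `x` and `z` has at least two boundary vertices. -/
def TwoBd (G : SimpleGraph V) (B : Finset V) (x z : V) : Prop :=
  ∀ T ⊆ B, x ∉ T → z ∉ T → T.Nonempty → 2 ≤ (bd G B T).card

/-- `U` avoids `x` and `z`, and its boundary in `B` is contained in `{v, x}`. -/
structure EndSet (G : SimpleGraph V) (B : Finset V) (x z : V) (U : Finset V) (v : V) : Prop where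
  sub : U ⊆ B
  x_notMem : x ∉ U
  z_notMem : z ∉ U
  nonempty : U.Nonempty
  v_mem : v ∈ B
  v_notMem : v ∉ U
  v_ne : v ≠ x
  closed : ∀ t ∈ U, ∀ w ∈ B, G.Adj t w → w ∈ U ∨ w = v ∨ w = x

variable {B U T : Finset V} {x z v e x' : V} {k n : ℕ}

lemma EndSet.adj (hU : EndSet G B x z U v) (h2 : TwoBd G B x z) :
    (∃ t ∈ U, G.Adj t x) ∧ ∃ t ∈ U, G.Adj t v := by
  have h := h2 U hU.sub hU.x_notMem hU.z_notMem hU.nonempty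
  have hsub : bd G B U ⊆ {v, x} := by
    intro y hy
    obtain ⟨h1, h2, t, ht, hty⟩ := mem_bd.1 hy
    rcases hU.closed t ht y h1 hty with h | h | h
    · exact absurd h h2
    · simp [h]
    · simp [h]
  have hc : ({v, x} : Finset V).card ≤ 2 := Finset.card_le_two
  have heq := Finset.eq_of_subset_of_card_le hsub (hc.trans h)
  constructor
  · exact (mem_bd.1 (show x ∈ bd G B U by simp [heq])).2.2
  · exact (mem_bd.1 (show v ∈ bd G B U by simp [heq])).2.2

/-- A set with few boundary vertices besides `x` is an end set. -/
lemma exists_endSet (h2 : TwoBd G B x z) {D : Finset V} (hT : T ⊆ B) (hx : x ∉ T) (hz : z ∉ T)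
    (hne : T.Nonempty) (hD : (bd G D T).card ≤ 1)
    (hBD : ∀ t ∈ T, ∀ w ∈ B, G.Adj t w → w ∈ D ∨ w = x) : ∃ v', EndSet G B x z T v' := by
  have hb := h2 T hT hx hz hne
  obtain ⟨v', hv', hv'x⟩ := Finset.exists_mem_ne (s := bd G B T) (by omega) x
  obtain ⟨hv'B, hv'T, t, ht, htv'⟩ := mem_bd.1 hv'
  have hv'D : v' ∈ bd G D T :=
    mem_bd.2 ⟨(hBD t ht v' hv'B htv').resolve_right hv'x, hv'T, t, ht, htv'⟩
  refine ⟨v', hT, hx, hz, hne, hv'B, hv'T, hv'x, ?_⟩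
  intro s hs w hw hsw
  by_cases hwT : w ∈ T
  · exact Or.inl hwT
  · rcases hBD s hs w hw hsw with h | h
    · exact Or.inr (Or.inl (Finset.card_le_one.1 hD w (mem_bd.2 ⟨h, hwT, s, hs, hsw⟩) v' hv'D))
    · exact Or.inr (Or.inr h)

lemma EndSet.twoBd (hU : EndSet G B x z U v) (h2 : TwoBd G B x z)
    (hmin : ∀ T ⊆ U, x' ∉ T → ∀ v', ¬ EndSet G B x z T v') :
    TwoBd G (insert v U) x' v := by
  intro T hT hx' hv hne
  by_contra hlt
  have hTU : T ⊆ U := (Finset.subset_insert_iff_of_notMem hv).1 hT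
  obtain ⟨v', hv'⟩ := exists_endSet h2 (D := insert v U) (hTU.trans hU.sub)
    (fun h => hU.x_notMem (hTU h)) (fun h => hU.z_notMem (hTU h)) hne (by omega) (by
      intro t ht w hw htw
      have := hU.closed t (hTU ht) w hw htw
      simp only [Finset.mem_insert]
      tauto)
  exact hmin T hTU hx' v' hv'

lemma EndSet.extend (hU : EndSet G B x z U v) (h2 : TwoBd G B x z) (hx : x ∈ B)
    (hxz : x ≠ z) (hxx' : G.Adj x x') (hp : PathIn G (insert v U) x' v n) :
    ∃ m ≥ n + 1, PathIn G B x z m := by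
  set B' := B \ insert x U with hB'
  have hvB' : v ∈ B' := by simp [hB', hU.v_mem, hU.v_ne, hU.v_notMem]
  have hvR : v ∈ reach G B' v := self_mem_reach hvB'
  have hRB' : reach G B' v ⊆ B' := reach_subset
  by_cases hz : z ∈ reach G B' v
  · obtain ⟨m, hm⟩ := exists_pathIn_reach hvR hz
    have h1 := hp.cons hxx' (by
      simp only [Finset.mem_insert, not_or]
      exact ⟨hU.v_ne.symm, hU.x_notMem⟩)
    have h3 := h1.append hm (by
      intro y hy hyR
      have := hRB' hyR
      simp only [hB', Finset.mem_sdiff, Finset.mem_insert, not_or] at this hy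
      tauto)
    refine ⟨n + 1 + m, by omega, h3.mono ?_⟩
    intro y hy
    simp only [Finset.mem_union, Finset.mem_insert] at hy
    rcases hy with (rfl | rfl | hy) | hy
    · exact hx
    · exact hU.v_mem
    · exact hU.sub hy
    · exact Finset.sdiff_subset (hRB' hy)
  · exfalso
    have hxR : x ∉ reach G B' v := fun h => by simpa [hB'] using hRB' h
    have := h2 (reach G B' v ∪ U)
      (Finset.union_subset (hRB'.trans Finset.sdiff_subset) hU.sub)
      (by simp [hxR, hU.x_notMem]) (by simp [hz, hU.z_notMem]) ⟨v, by simp [hvR]⟩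
    have hsub : bd G B (reach G B' v ∪ U) ⊆ {x} := by
      intro y hy
      obtain ⟨hyB, hy', t, ht, hty⟩ := mem_bd.1 hy
      simp only [Finset.mem_union, not_or] at hy' ht
      rw [Finset.mem_singleton]
      rcases ht with ht | ht
      · by_contra hyx
        exact hy'.1 (mem_reach_of_adj ht hty (by simp [hB', hyB, hyx, hy'.2]))
      · rcases hU.closed t ht y hyB hty with h | h | h
        · exact absurd h hy'.2
        · exact absurd (h ▸ hvR) hy'.1
        · exact h
    have := Finset.card_le_card hsub
    simp at this
    omega

/-- The statement of the long path lemma for a given length. -/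
def LongPath (G : SimpleGraph V) (k : ℕ) : Prop :=
  ∀ (B : Finset V) (x z e : V), x ∈ B → z ∈ B → x ≠ z → TwoBd G B x z →
    (∀ v ∈ B, v ≠ x → v ≠ z → v ≠ e → k ≤ (nbr G B v).card) →
    (∃ v ∈ B, v ≠ x ∧ v ≠ z ∧ (3 ≤ k → v ≠ e)) → ∃ n ≥ k, PathIn G B x z n

lemma EndSet.peel (hU : EndSet G B x z U v) (h2 : TwoBd G B x z) (hx : x ∈ B)
    (hxz : x ≠ z) (ih : LongPath G k) (hx' : x' ∈ U) (hxx' : G.Adj x x')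
    (hmin : ∀ T ⊆ U, x' ∉ T → ∀ v', ¬ EndSet G B x z T v')
    (hdeg : ∀ u ∈ U, u ≠ e → k + 1 ≤ (nbr G B u).card)
    (hex : ∃ w ∈ U, w ≠ x' ∧ (3 ≤ k → w ≠ e)) : ∃ m ≥ k + 1, PathIn G B x z m := by
  have hx'v : x' ≠ v := fun h => hU.v_notMem (h ▸ hx')
  obtain ⟨n, hn, hp⟩ := ih (insert v U) x' v e (by simp [hx']) (by simp) hx'v
    (hU.twoBd h2 hmin) (by
      intro u hu hux huv hue
      have huU : u ∈ U := (Finset.mem_insert.1 hu).resolve_left huv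
      have hsub : nbr G B u ⊆ insert x (nbr G (insert v U) u) := by
        intro w hw
        have hw := mem_nbr.1 hw
        have := hU.closed u huU w hw.1 hw.2
        simp only [Finset.mem_insert, mem_nbr]
        tauto
      have := (Finset.card_le_card hsub).trans (Finset.card_insert_le _ _)
      have := hdeg u huU hue
      omega) (by
      obtain ⟨w, hw, h1, h3⟩ := hex
      exact ⟨w, by simp [hw], h1, fun h => hU.v_notMem (h ▸ hw), h3⟩)
  obtain ⟨m, hm, h⟩ := hU.extend h2 hx hxz hxx' hp
  exact ⟨m, by omega, h⟩

lemma EndSet.card_nbr_le (hU : EndSet G B x z U v) (hx' : x' ∈ U) :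
    (nbr G B x').card ≤ (U.erase x').card + 2 := by
  have hsub : nbr G B x' ⊆ U.erase x' ∪ {v, x} := by
    intro w hw
    have hw := mem_nbr.1 hw
    have := hU.closed x' hx' w hw.1 hw.2
    have := hw.2.ne'
    simp only [Finset.mem_union, Finset.mem_erase, Finset.mem_insert, Finset.mem_singleton]
    tauto
  calc _ ≤ _ := Finset.card_le_card hsub
    _ ≤ _ := Finset.card_union_le _ _
    _ ≤ _ := by gcongr; exact Finset.card_le_two

lemma longPath_of_le_two (hk : k ≤ 2) : LongPath G k := by
  intro B x z e hx hz hxz h2 _ ⟨u, hu, hux, huz, _⟩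
  have hu' : u ∈ B \ {x, z} := by simp [hu, hux, huz]
  have huR := self_mem_reach (G := G) hu'
  have hRs : reach G (B \ {x, z}) u ⊆ B \ {x, z} := reach_subset
  have hxR : x ∉ reach G (B \ {x, z}) u := fun h => by simpa using hRs h
  have hzR : z ∉ reach G (B \ {x, z}) u := fun h => by simpa using hRs h
  have hb := h2 _ (hRs.trans Finset.sdiff_subset) hxR hzR ⟨u, huR⟩
  have hsub : bd G B (reach G (B \ {x, z}) u) ⊆ {x, z} :=
    bd_reach_subset.trans (by intro y; simp)
  have heq := Finset.eq_of_subset_of_card_le hsub (Finset.card_le_two.trans hb)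
  obtain ⟨-, -, t, ht, htx⟩ := mem_bd.1 (show x ∈ bd G B _ by rw [heq]; simp)
  obtain ⟨-, -, s, hs, hsz⟩ := mem_bd.1 (show z ∈ bd G B _ by rw [heq]; simp)
  obtain ⟨n, hn⟩ := exists_pathIn_reach ht hs
  have h1 := hn.symm.cons hsz.symm hzR
  have h3 := h1.symm.cons htx.symm (by simp [hxz, hxR])
  refine ⟨n + 1 + 1, by omega, h3.mono ?_⟩
  intro y hy
  simp only [Finset.mem_insert] at hy
  rcases hy with rfl | rfl | hy
  · exact hx
  · exact hz
  · exact Finset.sdiff_subset (hRs hy)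

theorem longPath (G : SimpleGraph V) (k : ℕ) : LongPath G k := by
  induction k using Nat.strong_induction_on with
  | _ k ih =>
  rcases Nat.lt_or_ge 2 k with hk | hk
  swap
  · exact longPath_of_le_two hk
  obtain ⟨k, rfl⟩ : ∃ j, k = j + 1 := ⟨k - 1, by omega⟩
  intro B x z e hx hz hxz h2 hdeg ⟨u₀, hu₀, hu₀x, hu₀z, hu₀e⟩
  have hdegU : ∀ U v, EndSet G B x z U v → ∀ u ∈ U, u ≠ e → k + 1 ≤ (nbr G B u).card :=
    fun U v hU u hu hue => hdeg u (hU.sub hu) (fun h => hU.x_notMem (h ▸ hu))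
      (fun h => hU.z_notMem (h ▸ hu)) hue
  by_cases hcase : ∃ U v, EndSet G B x z U v ∧ e ∉ U
  · obtain ⟨U, ⟨v, hU, heU⟩, hmin⟩ := exists_min_card hcase
    obtain ⟨x', hx', hxx'⟩ := (hU.adj h2).1
    have hne : ∀ w ∈ U, w ≠ e := fun w hw h => heU (h ▸ hw)
    refine hU.peel h2 hx hxz (ih k (by omega)) hx' hxx'.symm ?_ (hdegU U v hU) ?_
    · intro T hT hx'T v' hT'
      have := hmin T ⟨v', hT', fun h => heU (hT h)⟩
      have hss : T ⊂ U := ⟨hT, fun h => hx'T (h hx')⟩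
      have := Finset.card_lt_card hss
      omega
    · have h1 := hU.card_nbr_le hx'
      have h3 := hdegU U v hU x' hx' (hne x' hx')
      obtain ⟨w, hw⟩ := Finset.card_pos.1 (show 0 < (U.erase x').card by omega)
      rw [Finset.mem_erase] at hw
      exact ⟨w, hw.2, hw.1, fun _ => hne w hw.2⟩
  · push Not at hcase
    obtain ⟨U, ⟨v, hU⟩, hmin⟩ := exists_min_card (P := fun U => ∃ v, EndSet G B x z U v)
      ⟨(B.erase x).erase z, z, by
        refine ⟨?_, by simp, by simp, ⟨u₀, by simp [*]⟩, hz, by simp, hxz.symm, ?_⟩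
        · exact (Finset.erase_subset _ _).trans (Finset.erase_subset _ _)
        · intro t _ w hw _
          simp only [Finset.mem_erase]
          tauto⟩
    have heU := hcase U v hU
    by_cases hUe : U = {e}
    · subst hUe
      obtain ⟨⟨t, ht, htx⟩, ⟨s, hs, hsv⟩⟩ := hU.adj h2
      obtain rfl : t = e := by simpa using ht
      obtain rfl : s = t := by simpa using hs
      have hsB : s ∈ B := hU.sub (by simp)
      have hcl : ∀ w ∈ B, G.Adj s w → w = v ∨ w = x := by
        intro w hw hsw
        rcases hU.closed s (by simp) w hw hsw with h | h
        · exact absurd (by simpa using h) hsw.ne'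
        · exact h
      have hxs : x ≠ s := fun h => hU.x_notMem (by simp [h])
      have hvs : v ≠ s := fun h => hU.v_notMem (by simp [h])
      have hzs : z ≠ s := fun h => hU.z_notMem (by simp [h])
      have hvx := hU.v_ne
      by_cases hvz : v = z
      · subst hvz
        exfalso
        have := hcase (((B.erase x).erase v).erase s) v (by
          refine ⟨?_, by simp, by simp, ⟨u₀, ?_⟩, hz, by simp, hxz.symm, ?_⟩
          · intro y; simp
          · simp [*, hu₀e (by omega)]
          · intro t ht w hw htw
            simp only [Finset.mem_erase] at ht ⊢
            by_cases hws : w = s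
            · subst hws
              have := hcl t ht.2.2.2 htw.symm
              tauto
            · tauto)
        simp at this
      · set B₂ := (B.erase x).erase s with hB₂
        have hpath : ∀ m, PathIn G B₂ v z m → ∃ n ≥ m + 2, PathIn G B x z n := by
          intro m hm
          have h1 := hm.cons hsv (by simp [hB₂])
          have h3 := h1.cons htx.symm (by simp [hB₂, hxs])
          refine ⟨_, le_rfl, h3.mono ?_⟩
          intro y hy
          simp only [hB₂, Finset.mem_insert, Finset.mem_erase] at hy
          rcases hy with rfl | rfl | hy
          · exact hx
          · exact hsB
          · exact hy.2.2
        have hvB₂ : v ∈ B₂ := by simp [hB₂, hU.v_mem, hvs, hvx]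
        have hzB₂ : z ∈ B₂ := by simp [hB₂, hz, hzs, hxz.symm]
        by_cases hw : ∃ w ∈ B₂, w ≠ v ∧ w ≠ z
        · obtain ⟨w, hw, hwv, hwz⟩ := hw
          have hB₂s : ∀ {w}, w ∈ B₂ → w ≠ s := fun h => by
            rw [hB₂, Finset.mem_erase] at h
            exact h.1
          obtain ⟨n, hn, hp⟩ := ih (k - 1) (by omega) B₂ v z s hvB₂ hzB₂ hvz (by
              intro T hT hvT hzT hne
              by_contra hlt
              have hTB : ∀ {t}, t ∈ T → t ∈ B ∧ t ≠ x ∧ t ≠ s := fun h => by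
                have := hT h
                rw [hB₂, Finset.mem_erase, Finset.mem_erase] at this
                tauto
              obtain ⟨v', hv'⟩ := exists_endSet h2 (D := B₂) (fun t ht => (hTB ht).1)
                (fun h => (hTB h).2.1 rfl) hzT hne (by omega) (by
                  intro t ht w hw htw
                  by_cases hws : w = s
                  · rw [hws] at htw
                    rcases hcl t (hTB ht).1 htw.symm with h | h
                    · exact absurd (h ▸ ht) hvT
                    · exact absurd h (hTB ht).2.1
                  · simp only [hB₂, Finset.mem_erase]
                    tauto)
              exact (hTB (hcase T v' hv')).2.2 rfl) (by
              intro y hy hyv hyz _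
              have hy' := hy
              rw [hB₂, Finset.mem_erase, Finset.mem_erase] at hy'
              have hsub : nbr G B y ⊆ insert x (nbr G B₂ y) := by
                intro w hw
                have hw := mem_nbr.1 hw
                by_cases hws : w = s
                · have h := hw.2
                  rw [hws] at h
                  have := hcl y hy'.2.2 h.symm
                  tauto
                · simp only [Finset.mem_insert, mem_nbr, hB₂, Finset.mem_erase]
                  tauto
              have := (Finset.card_le_card hsub).trans (Finset.card_insert_le _ _)
              have := hdeg y hy'.2.2 hy'.2.1 hyz hy'.1
              omega) ⟨w, hw, hwv, hwz, fun _ => hB₂s hw⟩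
          obtain ⟨m, hm, h⟩ := hpath n hp
          exact ⟨m, by omega, h⟩
        · push Not at hw
          have hsub : nbr G B v ⊆ {x, s, z} := by
            intro w hw'
            have hw' := mem_nbr.1 hw'
            have h1 := hw w
            have := hw'.2.ne'
            simp only [hB₂, Finset.mem_erase] at h1
            simp only [Finset.mem_insert, Finset.mem_singleton]
            tauto
          have h3 : ({x, s, z} : Finset V).card ≤ 3 := Finset.card_le_three
          have h4 := hdeg v hU.v_mem hvx hvz hvs
          have heq := Finset.eq_of_subset_of_card_le hsub (by omega)
          have hvz' : G.Adj v z := (mem_nbr.1 (show z ∈ nbr G B v by rw [heq]; simp)).2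
          have := Finset.card_le_card hsub
          obtain ⟨m, hm, h⟩ := hpath 1 ((PathIn.edge hvz').mono (by
            intro y hy
            simp only [Finset.mem_insert, Finset.mem_singleton] at hy
            rcases hy with rfl | rfl <;> assumption))
          exact ⟨m, by omega, h⟩
    · obtain ⟨w, hwU, hwe⟩ : ∃ w ∈ U, w ≠ e := by
        by_contra! h
        exact hUe (Finset.eq_singleton_iff_unique_mem.2 ⟨heU, h⟩)
      by_cases hxe : G.Adj x e
      · refine hU.peel h2 hx hxz (ih k (by omega)) heU hxe ?_ (hdegU U v hU)
          ⟨w, hwU, hwe, fun _ => hwe⟩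
        intro T _ heT v' hT
        exact heT (hcase T v' hT)
      · obtain ⟨x', hx', hxx'⟩ := (hU.adj h2).1
        have hx'e : x' ≠ e := fun h => hxe (h ▸ hxx'.symm)
        refine hU.peel h2 hx hxz (ih k (by omega)) hx' hxx'.symm ?_ (hdegU U v hU) ?_
        · intro T hT hx'T v' hT'
          have := hmin T ⟨v', hT'⟩
          have hss : T ⊂ U := ⟨hT, fun h => hx'T (h hx')⟩
          have := Finset.card_lt_card hss
          omega
        · have h1 := hU.card_nbr_le hx'
          have h3 := hdegU U v hU x' hx' hx'e
          by_cases hk3 : 3 ≤ k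
          · obtain ⟨w, hw, hwe⟩ := Finset.exists_mem_ne (s := U.erase x') (by omega) e
            rw [Finset.mem_erase] at hw
            exact ⟨w, hw.2, hw.1, fun _ => hwe⟩
          · exact ⟨e, heU, hx'e.symm, fun h => absurd h hk3⟩

end

/-! ### Longest cycles as permutations -/

section
open scoped Classical

set_option linter.unusedSectionVars false

variable [Fintype V] {G : SimpleGraph V}

/-- `σ` runs once around a longest cycle of `G` with vertex set `C`. -/
structure LongestCycle (G : SimpleGraph V) (σ : Equiv.Perm V) (C : Finset V) : Prop where
  cyc : σ.IsCycleOn (C : Set V)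
  adj : ∀ v ∈ C, G.Adj v (σ v)
  three_le : 3 ≤ C.card
  length_le : ∀ (x : V) (D : G.Walk x x), D.IsCycle → D.length ≤ C.card

lemma exists_perm_of_isCycle {x : V} {D : G.Walk x x} (hD : D.IsCycle) :
    ∃ σ : Equiv.Perm V, σ.IsCycleOn (D.support.toFinset : Set V) ∧
      (∀ v ∈ D.support.toFinset, G.Adj v (σ v)) ∧ D.support.toFinset.card = D.length := by
  cases D with
  | nil => exact absurd rfl hD.ne_nil
  | @cons _ v _ h p =>
    have hnd : p.support.Nodup := by simpa using hD.support_nodup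
    have hfin : (Walk.cons h p).support.toFinset = p.support.toFinset := by
      simp [p.end_mem_support]
    have hlen : p.support.length = p.length + 1 := p.length_support
    refine ⟨p.support.formPerm, ?_, ?_, ?_⟩
    · rw [hfin]
      convert hnd.isCycleOn_formPerm using 1
      ext; simp
    · intro w hw
      rw [hfin, List.mem_toFinset] at hw
      obtain ⟨i, hi, rfl⟩ := List.getElem_of_mem hw
      rw [List.formPerm_apply_getElem _ hnd i hi]
      rcases Nat.lt_or_ge (i + 1) p.support.length with hlt | hge
      · simp only [Nat.mod_eq_of_lt hlt]
        rw [p.support_getElem_eq_getVert, p.support_getElem_eq_getVert]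
        exact p.adj_getVert_succ (by omega)
      · have hi' : i + 1 = p.support.length := by omega
        simp only [hi', Nat.mod_self]
        rw [p.support_getElem_eq_getVert, p.support_getElem_eq_getVert]
        have : i = p.length := by omega
        subst this
        simpa using h
    · rw [hfin, List.toFinset_card_of_nodup hnd, hlen]
      simp

lemma exists_longestCycle (h : ∃ (x : V) (D : G.Walk x x), D.IsCycle) :
    ∃ (σ : Equiv.Perm V) (C : Finset V), LongestCycle G σ C ∧
      ∃ (x : V) (D : G.Walk x x), D.IsCycle ∧ D.length = C.card ∧ ∀ v, v ∈ D.support ↔ v ∈ C := by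
  have hbound : ∀ n, (∃ (x : V) (D : G.Walk x x), D.IsCycle ∧ D.length = n) →
      n ≤ Fintype.card V := by
    rintro n ⟨x, D, hD, rfl⟩
    obtain ⟨-, -, -, h⟩ := exists_perm_of_isCycle hD
    rw [← h]
    exact Finset.card_le_univ _
  obtain ⟨x₀, D₀, h₀⟩ := h
  let P : ℕ → Prop := fun n => ∃ (x : V) (D : G.Walk x x), D.IsCycle ∧ D.length = n
  have hP : P (Nat.findGreatest P (Fintype.card V)) :=
    Nat.findGreatest_spec (m := D₀.length) (hbound _ ⟨x₀, D₀, h₀, rfl⟩) ⟨x₀, D₀, h₀, rfl⟩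
  obtain ⟨x, D, hD, hl⟩ := hP
  obtain ⟨σ, h1, h2, h3⟩ := exists_perm_of_isCycle hD
  refine ⟨σ, D.support.toFinset, ⟨h1, h2, ?_, ?_⟩, x, D, hD, h3.symm, by simp⟩
  · rw [h3]; exact hD.three_le_length
  · intro y E hE
    rw [h3, hl]
    exact Nat.le_findGreatest (hbound _ ⟨y, E, hE, rfl⟩) ⟨y, E, hE, rfl⟩

namespace LongestCycle

variable {σ : Equiv.Perm V} {C : Finset V} {p q : V} {a b i j n : ℕ}

lemma apply_mem_iff (h : LongestCycle G σ C) : σ p ∈ C ↔ p ∈ C := by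
  simpa using h.cyc.apply_mem_iff (x := p)

lemma pow_mem (h : LongestCycle G σ C) (hp : p ∈ C) : ∀ n : ℕ, (σ ^ n) p ∈ C
  | 0 => by simpa using hp
  | n + 1 => by
    rw [pow_succ', Equiv.Perm.mul_apply]
    exact h.apply_mem_iff.2 (h.pow_mem hp n)

lemma pow_card (h : LongestCycle G σ C) (hp : p ∈ C) : (σ ^ C.card) p = p :=
  h.cyc.pow_card_apply hp

lemma exists_pow (h : LongestCycle G σ C) (hp : p ∈ C) (hq : q ∈ C) :
    ∃ n < C.card, (σ ^ n) p = q :=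
  h.cyc.exists_pow_eq hp hq

lemma exists_pow_pos (h : LongestCycle G σ C) (hp : p ∈ C) (hq : q ∈ C) (hpq : p ≠ q) :
    ∃ n, 0 < n ∧ n < C.card ∧ (σ ^ n) p = q := by
  obtain ⟨n, hn, he⟩ := h.exists_pow hp hq
  refine ⟨n, Nat.pos_of_ne_zero ?_, hn, he⟩
  rintro rfl
  exact hpq (by simpa using he)

lemma pow_eq (h : LongestCycle G σ C) (hp : p ∈ C) (hi : i ≤ C.card) (hj : j ≤ C.card)
    (he : (σ ^ i) p = (σ ^ j) p) : i = j ∨ (i = 0 ∧ j = C.card) ∨ (i = C.card ∧ j = 0) := by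
  have hm := (h.cyc.pow_apply_eq_pow_apply hp).1 he
  have h3 := h.three_le
  unfold Nat.ModEq at hm
  rcases hi.lt_or_eq with hi | hi <;> rcases hj.lt_or_eq with hj | hj
  · rw [Nat.mod_eq_of_lt hi, Nat.mod_eq_of_lt hj] at hm
    exact Or.inl hm
  · rw [Nat.mod_eq_of_lt hi, hj, Nat.mod_self] at hm
    exact Or.inr (Or.inl ⟨hm, hj⟩)
  · rw [Nat.mod_eq_of_lt hj, hi, Nat.mod_self] at hm
    exact Or.inr (Or.inr ⟨hi, hm.symm⟩)
  · exact Or.inl (hi.trans hj.symm)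

lemma pow_inj (h : LongestCycle G σ C) (hp : p ∈ C) (hi : i < C.card) (hj : j < C.card)
    (he : (σ ^ i) p = (σ ^ j) p) : i = j := by
  rcases h.pow_eq hp hi.le hj.le he with h | h | h <;> omega

lemma pow_ne (h : LongestCycle G σ C) (hp : p ∈ C) (hn : 0 < n) (hn' : n < C.card) :
    (σ ^ n) p ≠ p := fun he => by
  have := h.pow_inj hp hn' (j := 0) (by omega) (by simpa using he)
  omega

/-- The vertices `σ ^ a p, …, σ ^ b p`. -/
noncomputable def seg (σ : Equiv.Perm V) (p : V) (a b : ℕ) : Finset V :=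
  (Finset.Icc a b).image fun k => (σ ^ k) p

lemma mem_seg : q ∈ seg σ p a b ↔ ∃ k, a ≤ k ∧ k ≤ b ∧ (σ ^ k) p = q := by
  simp [seg, and_assoc]

lemma seg_subset (h : LongestCycle G σ C) (hp : p ∈ C) : seg σ p a b ⊆ C := by
  intro y hy
  obtain ⟨k, -, -, rfl⟩ := mem_seg.1 hy
  exact h.pow_mem hp k

lemma pathIn_seg (h : LongestCycle G σ C) (hp : p ∈ C) (n : ℕ) (hn : n < C.card) :
    PathIn G (seg σ p a (a + n)) ((σ ^ a) p) ((σ ^ (a + n)) p) n := by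
  induction n with
  | zero => exact PathIn.nil (mem_seg.2 ⟨a, le_rfl, le_rfl, rfl⟩)
  | succ n ih =>
    have hadj : G.Adj ((σ ^ (a + n)) p) ((σ ^ (a + (n + 1))) p) := by
      rw [← add_assoc, pow_succ' σ (a + n), Equiv.Perm.mul_apply]
      exact h.adj _ (h.pow_mem hp _)
    refine (((ih (by omega)).symm.cons hadj.symm ?_).symm).mono ?_
    · intro hmem
      obtain ⟨k, hak, hk, he⟩ := mem_seg.1 hmem
      obtain ⟨d, rfl⟩ := Nat.exists_eq_add_of_le hak
      have hq := h.pow_mem hp a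
      have := h.pow_inj (i := d) (j := n + 1) hq (by omega) (by omega) (by
        rw [← Equiv.Perm.mul_apply, ← Equiv.Perm.mul_apply, ← pow_add, ← pow_add, add_comm d,
          add_comm (n + 1)]
        exact he)
      omega
    · intro y hy
      rcases Finset.mem_insert.1 hy with rfl | hy
      · exact mem_seg.2 ⟨_, by omega, le_rfl, rfl⟩
      · obtain ⟨k, h1, h2, h3⟩ := mem_seg.1 hy
        exact mem_seg.2 ⟨k, h1, by omega, h3⟩

lemma pathIn_seg' (h : LongestCycle G σ C) (hp : p ∈ C) (hab : a ≤ b) (hb : b < a + C.card) :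
    PathIn G (seg σ p a b) ((σ ^ a) p) ((σ ^ b) p) (b - a) := by
  have := h.pathIn_seg (a := a) hp (b - a) (by omega)
  rwa [Nat.add_sub_of_le hab] at this

/-- A path meeting a longest cycle only in its ends is no longer than the arc it spans. -/
lemma detour_le (h : LongestCycle G σ C) (hp : p ∈ C) (hn : 0 < n) (hn' : n < C.card)
    {D : Finset V} {L : ℕ} (hD : PathIn G D p ((σ ^ n) p) L)
    (hDC : ∀ y ∈ D, y ∈ C → y = p ∨ y = (σ ^ n) p) : L ≤ n := by
  by_contra hlt
  have h3 := h.three_le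
  have harc := h.pathIn_seg' hp (a := n) (b := C.card) hn'.le (by omega)
  rw [h.pow_card hp] at harc
  obtain ⟨y, K, hK, hl⟩ := hD.exists_cycle harc (h.pow_ne hp hn hn').symm
    (fun y hy hy' => hDC y hy (h.seg_subset hp hy')) (by omega)
  have := h.length_le y K hK
  omega

/-- Two disjoint crossing chords of a longest cycle are short. -/
lemma crossing_le (h : LongestCycle G σ C) (hp : p ∈ C) (hi : 0 < i) (hin : i ≤ n) (hj : 0 < j)
    (hnj : n + j < C.card) {D₁ D₂ : Finset V} {L₁ L₂ : ℕ}
    (h₁ : PathIn G D₁ p ((σ ^ n) p) L₁) (h₂ : PathIn G D₂ ((σ ^ i) p) ((σ ^ (n + j)) p) L₂)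
    (hC₁ : ∀ y ∈ D₁, y ∈ C → y = p ∨ y = (σ ^ n) p)
    (hC₂ : ∀ y ∈ D₂, y ∈ C → y = (σ ^ i) p ∨ y = (σ ^ (n + j)) p)
    (hd : ∀ y ∈ D₁, y ∉ D₂) : L₁ + L₂ ≤ i + j := by
  by_contra hlt
  have h3 := h.three_le
  have a1 := h.pathIn_seg' hp (a := i) (b := n) hin (by omega)
  have a2 := h.pathIn_seg' hp (a := n + j) (b := C.card) hnj.le (by omega)
  rw [h.pow_card hp] at a2
  have e1 : ∀ k, k ≤ C.card → (σ ^ k) p = p → k = 0 ∨ k = C.card := fun k hk he => by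
    have := h.pow_eq hp hk (Nat.zero_le C.card) (by simpa using he)
    omega
  have p1 := h₁.append a1.symm (by
    intro y hy hy'
    obtain ⟨k, hk, hk', rfl⟩ := mem_seg.1 hy'
    refine (hC₁ _ hy (h.pow_mem hp k)).resolve_left fun he => ?_
    have := e1 k (by omega) he
    omega)
  have p2 := h₂.append a2 (by
    intro y hy hy'
    obtain ⟨k, hk, hk', rfl⟩ := mem_seg.1 hy'
    refine (hC₂ _ hy (h.pow_mem hp k)).resolve_left fun he => ?_
    have := h.pow_eq hp hk' (by omega) he
    omega)
  obtain ⟨y, K, hK, hl⟩ := p1.exists_cycle p2 (h.pow_ne hp hi (by omega)).symm (by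
    intro y hy hy'
    rw [Finset.mem_union] at hy hy'
    rcases hy with hy | hy <;> rcases hy' with hy' | hy'
    · exact absurd hy' (hd y hy)
    · obtain ⟨k, hk, hk', rfl⟩ := mem_seg.1 hy'
      refine Or.inl ((hC₁ _ hy (h.pow_mem hp k)).resolve_right fun he => ?_)
      have := h.pow_eq hp hk' (by omega) he
      omega
    · obtain ⟨k, hk, hk', rfl⟩ := mem_seg.1 hy
      refine Or.inr ((hC₂ _ hy' (h.pow_mem hp k)).resolve_right fun he => ?_)
      have := h.pow_eq hp (by omega) (by omega) he
      omega
    · obtain ⟨k, hk, hk', rfl⟩ := mem_seg.1 hy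
      obtain ⟨l, hl, hl', he⟩ := mem_seg.1 hy'
      have := h.pow_eq hp (by omega) (by omega) he
      omega) (by omega)
  have := h.length_le y K hK
  omega

end LongestCycle

end

/-! ### Separating sets -/

section
open scoped Classical

set_option linter.unusedSectionVars false

variable [Fintype V] {G : SimpleGraph V}

lemma kappa_le_of_isCutSet {Z : Finset V} (h : IsCutSet G Z) : kappa G ≤ Z.card :=
  Nat.sInf_le ⟨Z, Set.ncard_coe_finset Z, h⟩

/-- A set containing the outer neighbourhood of `T` and missing some other vertex separates `G`. -/
lemma kappa_le_of_separates {T Z : Finset V} (hT : T.Nonempty) (hTZ : ∀ t ∈ T, t ∉ Z)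
    (hN : ∀ t ∈ T, ∀ w, G.Adj t w → w ∈ T ∨ w ∈ Z) {v : V} (hvT : v ∉ T) (hvZ : v ∉ Z) :
    kappa G ≤ Z.card := by
  refine kappa_le_of_isCutSet (Or.inl fun hc => ?_)
  obtain ⟨t, ht⟩ := hT
  obtain ⟨p⟩ := hc.preconnected ⟨t, by simpa using hTZ t ht⟩ ⟨v, by simpa using hvZ⟩
  have key : ∀ {a b : ((Z : Set V)ᶜ : Set V)} (_ : (G.induce (Z : Set V)ᶜ).Walk a b),
      (a : V) ∈ T → (b : V) ∈ T := by
    intro a b p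
    induction p with
    | nil => exact id
    | @cons a c b hadj p ih =>
      intro ha
      refine ih ((hN _ ha _ hadj).resolve_right ?_)
      exact fun hZ => c.2 (Finset.mem_coe.2 hZ)
  exact hvT (key p ht)

lemma kappa_le_card_nbr (v : V) : kappa G ≤ (nbr G Finset.univ v).card := by
  by_cases h : ∃ w, w ≠ v ∧ ¬ G.Adj v w
  · obtain ⟨w, hw, hvw⟩ := h
    refine kappa_le_of_separates (T := {v}) (v := w) (by simp) (by simp [mem_nbr]) ?_ (by simpa)
      (by simpa [mem_nbr])
    intro t ht u hu
    rw [Finset.mem_singleton] at ht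
    subst ht
    exact Or.inr (mem_nbr.2 ⟨Finset.mem_univ _, hu⟩)
  · push Not at h
    refine kappa_le_of_isCutSet (Or.inr ?_)
    have : ∀ a, a ∉ nbr G Finset.univ v → a = v := fun a ha => by
      by_contra hne
      exact ha (mem_nbr.2 ⟨Finset.mem_univ _, h a hne⟩)
    intro a ha b hb
    rw [this a (by simpa using ha), this b (by simpa using hb)]

/-- `S` is a smallest separating set, and `A`, `B` are the two sides. -/
structure MinCut (G : SimpleGraph V) (S A B : Finset V) : Prop where
  card : S.card = kappa G
  nonempty_left : A.Nonempty
  nonempty_right : B.Nonempty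
  cover : ∀ v, v ∈ A ∨ v ∈ B ∨ v ∈ S
  disj : ∀ v ∈ A, v ∉ B
  disj_left : ∀ v ∈ A, v ∉ S
  disj_right : ∀ v ∈ B, v ∉ S
  not_adj : ∀ a ∈ A, ∀ b ∈ B, ¬ G.Adj a b

lemma MinCut.symm {S A B : Finset V} (h : MinCut G S A B) : MinCut G S B A where
  card := h.card
  nonempty_left := h.nonempty_right
  nonempty_right := h.nonempty_left
  cover v := by have := h.cover v; tauto
  disj v hv hv' := h.disj v hv' hv
  disj_left := h.disj_right
  disj_right := h.disj_left
  not_adj a ha b hb hab := h.not_adj b hb a ha hab.symm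

lemma exists_minCut {x y : V} (hxy : x ≠ y) (hadj : ¬ G.Adj x y) :
    ∃ S A B : Finset V, MinCut G S A B := by
  have hne : {k | ∃ S : Set V, S.ncard = k ∧ IsCutSet G S}.Nonempty :=
    ⟨_, Set.univ, rfl, Or.inr (by simp)⟩
  obtain ⟨S, hS, hcut⟩ := Nat.sInf_mem hne
  change S.ncard = kappa G at hS
  have hcard : S.toFinset.card = kappa G := by rw [← hS, Set.ncard_eq_toFinset_card']
  have hle : kappa G ≤ (Finset.univ \ {x, y} : Finset V).card :=
    kappa_le_of_separates (T := {x}) (v := y) (by simp) (by simp) (by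
      intro t ht w hw
      rw [Finset.mem_singleton] at ht
      subst ht
      refine Or.inr ?_
      have h1 := hw.ne'
      have h2 : w ≠ y := fun h => hadj (h ▸ hw)
      simp [h1, h2]) (by simpa using hxy.symm) (by simp)
  have hlt : (Finset.univ \ {x, y} : Finset V).card + 2 = Fintype.card V := by
    rw [← Finset.card_pair hxy, Finset.card_sdiff_add_card_eq_card (Finset.subset_univ _),
      Finset.card_univ]
  have hns : ¬ Sᶜ.Subsingleton := by
    intro hs
    have h1 : (S.toFinsetᶜ).card ≤ 1 := Finset.card_le_one.2 fun a ha b hb =>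
      hs (by simpa using ha) (by simpa using hb)
    have := Finset.card_add_card_compl S.toFinset
    omega
  have hnc := hcut.resolve_right hns
  have hnp : ¬ (G.induce Sᶜ).Preconnected := by
    intro hp
    rw [Set.not_subsingleton_iff] at hns
    obtain ⟨a, ha⟩ := hns.nonempty
    exact hnc { preconnected := hp, nonempty := ⟨⟨a, ha⟩⟩ }
  unfold SimpleGraph.Preconnected at hnp
  push Not at hnp
  obtain ⟨⟨u, hu⟩, ⟨v, hv⟩, huv⟩ := hnp
  have key : ∀ a b, (ha : a ∈ Sᶜ) → (hb : b ∈ Sᶜ) → G.Adj a b →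
      (G.induce Sᶜ).Reachable ⟨u, hu⟩ ⟨a, ha⟩ → (G.induce Sᶜ).Reachable ⟨u, hu⟩ ⟨b, hb⟩ := by
    intro a b ha hb hab h
    exact h.trans (SimpleGraph.Adj.reachable (by simpa using hab))
  refine ⟨S.toFinset,
    Finset.univ.filter fun w => ∃ hw : w ∈ Sᶜ, (G.induce Sᶜ).Reachable ⟨u, hu⟩ ⟨w, hw⟩,
    Finset.univ.filter fun w => ∃ hw : w ∈ Sᶜ, ¬ (G.induce Sᶜ).Reachable ⟨u, hu⟩ ⟨w, hw⟩,
    hcard, ⟨u, ?_⟩, ⟨v, ?_⟩, ?_, ?_, ?_, ?_, ?_⟩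
  · simp only [Finset.mem_filter, Finset.mem_univ, true_and]
    exact ⟨hu, .rfl⟩
  · simp only [Finset.mem_filter, Finset.mem_univ, true_and]
    exact ⟨hv, huv⟩
  · intro w
    simp only [Finset.mem_filter, Finset.mem_univ, true_and, Set.mem_toFinset]
    by_cases hw : w ∈ S
    · exact Or.inr (Or.inr hw)
    · by_cases hr : (G.induce Sᶜ).Reachable ⟨u, hu⟩ ⟨w, hw⟩
      · exact Or.inl ⟨hw, hr⟩
      · exact Or.inr (Or.inl ⟨hw, hr⟩)
  · intro w hw hw'
    simp only [Finset.mem_filter, Finset.mem_univ, true_and] at hw hw'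
    obtain ⟨h1, h2⟩ := hw
    obtain ⟨h3, h4⟩ := hw'
    exact h4 h2
  · intro w hw
    simp only [Finset.mem_filter, Finset.mem_univ, true_and] at hw
    simpa using hw.1
  · intro w hw
    simp only [Finset.mem_filter, Finset.mem_univ, true_and] at hw
    simpa using hw.1
  · intro a ha b hb hab
    simp only [Finset.mem_filter, Finset.mem_univ, true_and] at ha hb
    obtain ⟨h1, h2⟩ := ha
    obtain ⟨h3, h4⟩ := hb
    exact h4 (key a b h1 h3 hab h2)

lemma exists_isCycle_of_two_le_kappa (h : 2 ≤ kappa G) :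
    ∃ (x : V) (D : G.Walk x x), D.IsCycle := by
  by_contra! hno
  have hconn : G.Connected := by
    by_contra hnc
    have := kappa_le_of_isCutSet (G := G) (Z := ∅) (Or.inl fun hc => hnc (by
      have e : (G.induce ((∅ : Finset V) : Set V)ᶜ) ≃g G :=
        { toEquiv := (Equiv.subtypeUnivEquiv (by simp)), map_rel_iff' := by simp }
      exact e.connected_iff.1 hc))
    simp at this
    omega
  have hdeg : ∀ v, kappa G ≤ G.degree v := fun v => by
    have := kappa_le_card_nbr (G := G) v
    rwa [show nbr G Finset.univ v = G.neighborFinset v by ext; simp [mem_nbr]] at this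
  obtain ⟨v⟩ := hconn.nonempty
  have hnt : Nontrivial V := by
    have h1 := hdeg v
    obtain ⟨w, hw⟩ := (G.degree_pos_iff_exists_adj v).1 (by omega)
    exact ⟨v, w, hw.ne⟩
  have := IsTree.minDegree_eq_one_of_nontrivial (G := G) ⟨hconn, fun x D hD => hno x D hD⟩
  have h2 := G.le_minDegree_of_forall_le_degree _ hdeg
  omega

end

/-! ### Gaps between consecutive members of a subset of a cycle -/

section
open scoped Classical

set_option linter.unusedSectionVars false

variable [Fintype V] {G : SimpleGraph V} {σ : Equiv.Perm V} {C X Y : Finset V} {p q : V}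

/-- The number of steps from `p` to the next member of `X`. -/
noncomputable def gap (σ : Equiv.Perm V) (X : Finset V) (p : V) : ℕ :=
  sInf {g | 0 < g ∧ (σ ^ g) p ∈ X}

/-- The next member of `X` after `p`. -/
noncomputable def nxt (σ : Equiv.Perm V) (X : Finset V) (p : V) : V :=
  (σ ^ gap σ X p) p

lemma gap_le {g : ℕ} (hg : 0 < g) (h : (σ ^ g) p ∈ X) : gap σ X p ≤ g :=
  Nat.sInf_le ⟨hg, h⟩

namespace LongestCycle

lemma gap_spec (h : LongestCycle G σ C) (hX : X ⊆ C) (hp : p ∈ X) :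
    0 < gap σ X p ∧ nxt σ X p ∈ X := by
  have h3 := h.three_le
  exact Nat.sInf_mem (s := {g | 0 < g ∧ (σ ^ g) p ∈ X})
    ⟨C.card, by omega, by rw [h.pow_card (hX hp)]; exact hp⟩

lemma subset_of_nxt_closed (h : LongestCycle G σ C) (hX : X ⊆ C) (hYX : Y ⊆ X) (hY : Y.Nonempty)
    (hcl : ∀ p ∈ Y, nxt σ X p ∈ Y) : X ⊆ Y := by
  obtain ⟨p₀, hp₀⟩ := hY
  have key : ∀ n : ℕ, ∀ p ∈ Y, (σ ^ n) p ∈ X → (σ ^ n) p ∈ Y := by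
    intro n
    induction n using Nat.strong_induction_on with
    | _ n ih =>
    intro p hp hn
    rcases Nat.eq_zero_or_pos n with rfl | hpos
    · simpa using hp
    · have hle := gap_le hpos hn
      have hg := (h.gap_spec hX (hYX hp)).1
      have he : (σ ^ n) p = (σ ^ (n - gap σ X p)) (nxt σ X p) := by
        rw [nxt, ← Equiv.Perm.mul_apply, ← pow_add, Nat.sub_add_cancel hle]
      rw [he] at hn ⊢
      exact ih _ (by omega) _ (hcl p hp) hn
  intro q hq
  obtain ⟨n, -, rfl⟩ := h.exists_pow (hX (hYX hp₀)) (hX hq)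
  exact key n p₀ hp₀ hq

lemma gap_lt (h : LongestCycle G σ C) (hX : X ⊆ C) (h2 : 2 ≤ X.card) (hp : p ∈ X) :
    gap σ X p < C.card := by
  by_contra hge
  obtain ⟨q, hq, hqp⟩ := Finset.exists_mem_ne (s := X) (by omega) p
  obtain ⟨n, hn, hn', rfl⟩ := h.exists_pow_pos (hX hp) (hX hq) hqp.symm
  have := gap_le hn hq
  omega

lemma sum_gap_le (h : LongestCycle G σ C) (hX : X ⊆ C) : ∑ p ∈ X, gap σ X p ≤ C.card := by
  have hcard : (X.sigma fun p => Finset.range (gap σ X p)).card = ∑ p ∈ X, gap σ X p := by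
    rw [Finset.card_sigma]
    simp
  rw [← hcard]
  have key : ∀ p ∈ X, ∀ q ∈ X, ∀ a b : ℕ, a ≤ b → b < gap σ X q → (σ ^ a) p = (σ ^ b) q →
      a = b := by
    intro p hp q hq a b hab hb he
    by_contra hne
    obtain ⟨d, rfl⟩ := Nat.exists_eq_add_of_le hab
    rw [pow_add, Equiv.Perm.mul_apply] at he
    have he := (σ ^ a).injective he
    have := gap_le (σ := σ) (X := X) (p := q) (g := d) (by omega) (by rw [← he]; exact hp)
    omega
  refine Finset.card_le_card_of_injOn (fun x => (σ ^ x.2) x.1) ?_ ?_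
  · rintro ⟨p, g⟩ hx
    simp only [Finset.mem_coe, Finset.mem_sigma] at hx
    exact h.pow_mem (hX hx.1) _
  · rintro ⟨p, a⟩ hx ⟨q, b⟩ hy he
    simp only [Finset.mem_coe, Finset.mem_sigma, Finset.mem_range] at hx hy he
    have hab : a = b := by
      rcases le_total a b with hab | hab
      · exact key p hx.1 q hy.1 a b hab hy.2 he
      · exact (key q hy.1 p hx.1 b a hab hx.2 he.symm).symm
    subst hab
    have := (σ ^ a).injective he
    subst this
    rfl

lemma card_add_mul_card_le (h : LongestCycle G σ C) (hX : X ⊆ C) {R : Finset V} (hR : R ⊆ X)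
    {l : ℕ} (h2 : ∀ p ∈ X, 2 ≤ gap σ X p) (hl : ∀ p ∈ R, l + 2 ≤ gap σ X p) :
    2 * X.card + l * R.card ≤ C.card := by
  refine le_trans ?_ (h.sum_gap_le hX)
  have h1 : 2 * (X \ R).card ≤ ∑ p ∈ X \ R, gap σ X p := by
    rw [mul_comm, ← smul_eq_mul]
    exact Finset.card_nsmul_le_sum _ _ _ fun p hp => h2 p (Finset.sdiff_subset hp)
  have h3 : (l + 2) * R.card ≤ ∑ p ∈ R, gap σ X p := by
    rw [mul_comm, ← smul_eq_mul]
    exact Finset.card_nsmul_le_sum _ _ _ hl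
  have h4 := Finset.sum_sdiff (f := gap σ X) hR
  have h5 := Finset.card_sdiff_add_card_eq_card hR
  nlinarith

end LongestCycle

end

/-! ### Components outside a longest cycle -/

section
open scoped Classical

set_option linter.unusedSectionVars false

variable [Fintype V] {G : SimpleGraph V} {σ : Equiv.Perm V} {C H X : Finset V} {p q u v : V}

lemma PathIn.link {m : ℕ} (hm : PathIn G H u v m) (hpu : G.Adj p u) (hvq : G.Adj v q)
    (hp : p ∉ H) (hq : q ∉ H) (hpq : p ≠ q) :
    PathIn G (insert p (insert q H)) p q (m + 2) :=
  ((hm.symm.cons hvq.symm hq).symm).cons hpu (by simp [hpq, hp])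

/-- `H` is the vertex set of a component of `G - C`. -/
structure OuterPiece (G : SimpleGraph V) (C H : Finset V) : Prop where
  out : ∀ v ∈ H, v ∉ C
  closed : ∀ v ∈ H, ∀ w, G.Adj v w → w ∈ H ∨ w ∈ C
  conn : ∀ u ∈ H, ∀ v ∈ H, ∃ n, PathIn G H u v n

lemma outerPiece_reach (G : SimpleGraph V) (C : Finset V) (u : V) :
    OuterPiece G C (reach G Cᶜ u) where
  out v hv := by simpa using reach_subset hv
  closed v hv w hvw := by
    by_cases hw : w ∈ C
    · exact Or.inr hw
    · exact Or.inl (mem_reach_of_adj hv hvw (by simpa))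
  conn _ hv _ hw := exists_pathIn_reach hv hw

lemma LongestCycle.detour_piece (h : LongestCycle G σ C) (hH : ∀ v ∈ H, v ∉ C) {n m : ℕ}
    (hp : p ∈ C) (hn : 0 < n) (hn' : n < C.card) (hm : PathIn G H u v m) (hpu : G.Adj p u)
    (hvq : G.Adj v ((σ ^ n) p)) : m + 2 ≤ n := by
  refine h.detour_le hp hn hn' (hm.link hpu hvq (fun hpH => hH _ hpH hp)
    (fun hqH => hH _ hqH (h.pow_mem hp n)) (h.pow_ne hp hn hn').symm) ?_
  intro y hy hyC
  simp only [Finset.mem_insert] at hy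
  rcases hy with hy | hy | hy
  · exact Or.inl hy
  · exact Or.inr hy
  · exact absurd hyC (hH y hy)

lemma OuterPiece.bd_nonempty (hH : OuterPiece G C H) {Q : Finset V} (hQ : Q ⊆ H)
    (hne : Q.Nonempty) (hv : v ∈ H) (hvQ : v ∉ Q) : (bd G H Q).Nonempty := by
  obtain ⟨u, hu⟩ := hne
  obtain ⟨n, w, -, -, hw⟩ := hH.conn u (hQ hu) v hv
  have key : ∀ {a b : V} (w : G.Walk a b), (∀ y ∈ w.support, y ∈ H) → a ∈ Q → b ∉ Q →
      (bd G H Q).Nonempty := by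
    intro a b w
    induction w with
    | nil => exact fun _ h h' => absurd h h'
    | @cons a c b hac w ih =>
      intro hs ha hb
      by_cases hc : c ∈ Q
      · exact ih (fun y hy => hs y (by simp [hy])) hc hb
      · exact ⟨c, mem_bd.2 ⟨hs c (by simp), hc, a, ha, hac⟩⟩
  exact key w hw hu hvQ

lemma OuterPiece.le_card_nbr_add (hH : OuterPiece G C H) (hv : v ∈ H) :
    (nbr G Finset.univ v).card ≤ (nbr G H v).card + (nbr G C v).card := by
  refine (Finset.card_le_card ?_).trans (Finset.card_union_le _ _)
  intro w hw
  have := (mem_nbr.1 hw).2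
  simp only [Finset.mem_union, mem_nbr]
  have := hH.closed v hv w this
  tauto

lemma LongestCycle.count_gaps (h : LongestCycle G σ C) (hH : OuterPiece G C H) (hX : X ⊆ C)
    (h2 : 2 ≤ X.card) (hatt : ∀ p ∈ X, ∃ u ∈ H, G.Adj p u) {R : Finset V} (hR : R ⊆ X) {l : ℕ}
    (hl : ∀ p ∈ R, ∃ u v m, G.Adj p u ∧ G.Adj v (nxt σ X p) ∧ l ≤ m ∧ PathIn G H u v m) :
    2 * X.card + l * R.card ≤ C.card := by
  have key : ∀ p ∈ X, ∀ u v m, G.Adj p u → G.Adj v (nxt σ X p) → PathIn G H u v m →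
      m + 2 ≤ gap σ X p := fun p hp u v m hpu hvq hm =>
    h.detour_piece hH.out (hX hp) (h.gap_spec hX hp).1 (h.gap_lt hX h2 hp) hm hpu hvq
  refine h.card_add_mul_card_le hX hR ?_ ?_
  · intro p hp
    obtain ⟨u, hu, hpu⟩ := hatt p hp
    obtain ⟨v, hv, hqv⟩ := hatt _ (h.gap_spec hX hp).2
    obtain ⟨m, hm⟩ := hH.conn u hu v hv
    have := key p hp u v m hpu hqv.symm hm
    omega
  · intro p hp
    obtain ⟨u, v, m, hpu, hvq, hlm, hm⟩ := hl p hp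
    have := key p (hR hp) u v m hpu hvq hm
    omega

/-- The vertices of `C` adjacent to a member of `Q`. -/
noncomputable def attach (G : SimpleGraph V) (C Q : Finset V) : Finset V :=
  C.filter fun p => ∃ u ∈ Q, G.Adj p u

lemma mem_attach {Q : Finset V} : p ∈ attach G C Q ↔ p ∈ C ∧ ∃ u ∈ Q, G.Adj p u := by
  simp [attach]

lemma OuterPiece.kappa_le_attach (hH : OuterPiece G C H) {Q : Finset V} (hQ : Q ⊆ H)
    (hne : Q.Nonempty) (hv : v ∉ Q) (hvb : v ∉ bd G H Q) (hva : v ∉ attach G C Q) :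
    kappa G ≤ (bd G H Q).card + (attach G C Q).card := by
  refine (kappa_le_of_separates (T := Q) (Z := bd G H Q ∪ attach G C Q) hne ?_ ?_ hv
    (by simp [hvb, hva])).trans (Finset.card_union_le _ _)
  · intro t ht h
    rcases Finset.mem_union.1 h with h | h
    · exact (mem_bd.1 h).2.1 ht
    · exact hH.out t (hQ ht) (mem_attach.1 h).1
  · intro t ht w hw
    by_cases hwQ : w ∈ Q
    · exact Or.inl hwQ
    · refine Or.inr (Finset.mem_union.2 ?_)
      rcases hH.closed t (hQ ht) w hw with h | h
      · exact Or.inl (mem_bd.2 ⟨h, hwQ, t, ht, hw⟩)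
      · exact Or.inr (mem_attach.2 ⟨h, t, ht, hw.symm⟩)

lemma OuterPiece.exists_long_paths (hH3 : 3 ≤ H.card)
    (h2 : ∀ x ∈ H, ∀ z ∈ H, x ≠ z → TwoBd G H x z) :
    ∃ y₁ ∈ H, ∃ y₂ ∈ H, y₁ ≠ y₂ ∧ (nbr G H y₁).card ≤ (nbr G H y₂).card ∧
      2 ≤ (nbr G H y₂).card ∧
      ∀ x ∈ H, ∀ z ∈ H, x ≠ z → ∃ m ≥ (nbr G H y₂).card, PathIn G H x z m := by
  obtain ⟨y₁, hy₁, hmin₁⟩ := H.exists_min_image (fun v => (nbr G H v).card)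
    (Finset.card_pos.1 (by omega))
  obtain ⟨y₂, hy₂, hmin₂⟩ := (H.erase y₁).exists_min_image (fun v => (nbr G H v).card)
    (Finset.card_pos.1 (by rw [Finset.card_erase_of_mem hy₁]; omega))
  rw [Finset.mem_erase] at hy₂
  have havoid : ∀ s : Finset V, s.card < H.card → ∃ v ∈ H, v ∉ s := fun s hs =>
    Finset.exists_mem_notMem_of_card_lt_card hs
  have hsub : nbr G H y₂ ⊆ H.erase y₂ := by
    intro w hw
    have := mem_nbr.1 hw
    exact Finset.mem_erase.2 ⟨this.2.ne', this.1⟩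
  have hcard := Finset.card_le_card hsub
  rw [Finset.card_erase_of_mem hy₂.2] at hcard
  refine ⟨y₁, hy₁, y₂, hy₂.2, hy₂.1.symm, hmin₁ y₂ hy₂.2, ?_, ?_⟩
  · obtain ⟨x, hx, hxs⟩ := havoid {y₁, y₂} (Finset.card_le_two.trans_lt (by omega))
    simp only [Finset.mem_insert, Finset.mem_singleton, not_or] at hxs
    refine (h2 x hx y₁ hy₁ hxs.1 {y₂} (by simpa using hy₂.2) (by simpa using hxs.2)
      (by simpa using hy₂.1.symm) (by simp)).trans (Finset.card_le_card ?_)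
    intro w hw
    obtain ⟨h1, -, t, ht, htw⟩ := mem_bd.1 hw
    rw [Finset.mem_singleton] at ht
    subst ht
    exact mem_nbr.2 ⟨h1, htw⟩
  · intro x hx z hz hxz
    refine longPath G _ H x z y₁ hx hz hxz (h2 x hx z hz hxz) ?_ ?_
    · intro v hv _ _ hvy
      exact hmin₂ v (Finset.mem_erase.2 ⟨hvy, hv⟩)
    · by_cases h3 : 3 ≤ (nbr G H y₂).card
      · obtain ⟨v, hv, hvs⟩ := havoid {x, z, y₁} (Finset.card_le_three.trans_lt (by omega))
        simp only [Finset.mem_insert, Finset.mem_singleton, not_or] at hvs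
        exact ⟨v, hv, hvs.1, hvs.2.1, fun _ => hvs.2.2⟩
      · obtain ⟨v, hv, hvs⟩ := havoid {x, z} (Finset.card_le_two.trans_lt (by omega))
        simp only [Finset.mem_insert, Finset.mem_singleton, not_or] at hvs
        exact ⟨v, hv, hvs.1, hvs.2, fun h => absurd h h3⟩

/-- The members of `X` whose neighbourhood in `H` is not a single vertex shared with the next
member of `X`. -/
noncomputable def switching (G : SimpleGraph V) (σ : Equiv.Perm V) (H X : Finset V) : Finset V :=
  X.filter fun p => ¬ ∃ y, nbr G H p = {y} ∧ nbr G H (nxt σ X p) = {y}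

/-- If few members of `attach G C H` are switching, then few vertices separate `H`. -/
lemma LongestCycle.kappa_le_switching (h : LongestCycle G σ C) (hH : OuterPiece G C H)
    (hX : (attach G C H).Nonempty)
    (hRH : max 1 (switching G σ H (attach G C H)).card < H.card)
    (hRC : max 1 (switching G σ H (attach G C H)).card < C.card) :
    kappa G ≤ max 1 (switching G σ H (attach G C H)).card := by
  set X := attach G C H with hXdef
  set R := switching G σ H X with hRdef
  have hXC : X ⊆ C := Finset.filter_subset _ _
  have hR : ∀ p ∈ X, p ∉ R → ∃ y, nbr G H p = {y} ∧ nbr G H (nxt σ X p) = {y} := by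
    intro p hp hpR
    by_contra hno
    exact hpR (Finset.mem_filter.2 ⟨hp, hno⟩)
  have main : ∃ Z : Finset V, Z.card ≤ max 1 R.card ∧
      ∀ t ∈ H, ∀ p ∈ C, G.Adj t p → t ∈ Z ∨ p ∈ Z := by
    rcases R.eq_empty_or_nonempty with hR0 | hRne
    · obtain ⟨p₀, hp₀⟩ := hX
      obtain ⟨y, hy, -⟩ := hR p₀ hp₀ (by simp [hR0])
      have hsub := h.subset_of_nxt_closed hXC (Y := X.filter fun p => nbr G H p = {y})
        (Finset.filter_subset _ _) ⟨p₀, Finset.mem_filter.2 ⟨hp₀, hy⟩⟩ (by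
          intro p hp
          rw [Finset.mem_filter] at hp ⊢
          obtain ⟨y', h1, h2⟩ := hR p hp.1 (by simp [hR0])
          have : y = y' := by
            rw [hp.2] at h1
            exact Finset.singleton_injective h1
          exact ⟨(h.gap_spec hXC hp.1).2, this ▸ h2⟩)
      refine ⟨{y}, by simp, fun t ht p hp htp => Or.inl ?_⟩
      have hpX : p ∈ X := mem_attach.2 ⟨hp, t, ht, htp.symm⟩
      rw [← (Finset.mem_filter.1 (hsub hpX)).2]
      exact mem_nbr.2 ⟨ht, htp.symm⟩
    · let z : V → V := fun t => if hz : ∃ y, nbr G H t = {y} then hz.choose else t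
      have hz : ∀ t y, nbr G H t = {y} → z t = y := by
        intro t y hy
        have hex : ∃ y, nbr G H t = {y} := ⟨y, hy⟩
        have h1 : z t = hex.choose := dif_pos hex
        rw [h1]
        exact Finset.singleton_injective (hex.choose_spec.symm.trans hy)
      set Y := X.filter fun p => ∃ t ∈ R, p = t ∨ ∃ y, nbr G H p = {y} ∧ nbr G H t = {y} with hY
      have hXY : X \ Y = ∅ := by
        by_contra hne
        have hsub := h.subset_of_nxt_closed hXC (Y := X \ Y) Finset.sdiff_subset
          (Finset.nonempty_iff_ne_empty.2 hne) (by
            intro p hp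
            rw [Finset.mem_sdiff] at hp ⊢
            refine ⟨(h.gap_spec hXC hp.1).2, fun hn => hp.2 ?_⟩
            have hpR : p ∉ R := fun hpR =>
              hp.2 (Finset.mem_filter.2 ⟨hp.1, p, hpR, Or.inl rfl⟩)
            obtain ⟨y, h1, h2⟩ := hR p hp.1 hpR
            obtain ⟨-, t, ht, h3⟩ := Finset.mem_filter.1 hn
            refine Finset.mem_filter.2 ⟨hp.1, t, ht, Or.inr ⟨y, h1, ?_⟩⟩
            rcases h3 with h3 | ⟨y', h3, h4⟩
            · rwa [h3] at h2
            · rw [h2] at h3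
              rwa [← Finset.singleton_injective h3] at h4)
        obtain ⟨t, ht⟩ := hRne
        have htX : t ∈ X := Finset.filter_subset _ _ ht
        exact (Finset.mem_sdiff.1 (hsub htX)).2 (Finset.mem_filter.2 ⟨htX, t, ht, Or.inl rfl⟩)
      refine ⟨R.image z, Finset.card_image_le.trans (le_max_right _ _), fun u hu p hp hup => ?_⟩
      have hpX : p ∈ X := mem_attach.2 ⟨hp, u, hu, hup.symm⟩
      have hpY : p ∈ Y := Finset.sdiff_eq_empty_iff_subset.1 hXY hpX
      have hun : u ∈ nbr G H p := mem_nbr.2 ⟨hu, hup.symm⟩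
      obtain ⟨-, t, ht, h3⟩ := Finset.mem_filter.1 hpY
      have hzt : z t ∈ R.image z := Finset.mem_image_of_mem z ht
      rcases h3 with h3 | ⟨y, h3, h4⟩
      · subst h3
        by_cases hex : ∃ y, nbr G H p = {y}
        · obtain ⟨y, hy⟩ := hex
          rw [hy, Finset.mem_singleton] at hun
          subst hun
          exact Or.inl (hz p u hy ▸ hzt)
        · have : z p = p := dif_neg hex
          exact Or.inr (this ▸ hzt)
      · rw [h3, Finset.mem_singleton] at hun
        subst hun
        exact Or.inl (hz t u h4 ▸ hzt)
  obtain ⟨Z, hZ, hcov⟩ := main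
  obtain ⟨t, ht, htZ⟩ := Finset.exists_mem_notMem_of_card_lt_card (hZ.trans_lt hRH)
  obtain ⟨v, hv, hvZ⟩ := Finset.exists_mem_notMem_of_card_lt_card (hZ.trans_lt hRC)
  refine (kappa_le_of_separates (T := H \ Z) (v := v) ⟨t, by simp [ht, htZ]⟩ (by simp) ?_ ?_
    hvZ).trans hZ
  · intro s hs w hw
    rw [Finset.mem_sdiff] at hs ⊢
    by_cases hwZ : w ∈ Z
    · exact Or.inr hwZ
    · refine Or.inl ⟨(hH.closed s hs.1 w hw).resolve_right fun hwC => ?_, hwZ⟩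
      rcases hcov s hs.1 w hwC hw with h | h
      · exact hs.2 h
      · exact hwZ h
  · intro hvT
    exact hH.out v (Finset.mem_sdiff.1 hvT).1 hv

lemma LongestCycle.length_of_twoBd (h : LongestCycle G σ C) (hH : OuterPiece G C H)
    (h4 : 4 ≤ kappa G) {δ : ℕ} (hδ : ∀ v, δ ≤ (nbr G Finset.univ v).card) (hH3 : 3 ≤ H.card)
    (h2 : ∀ x ∈ H, ∀ z ∈ H, x ≠ z → TwoBd G H x z) : 4 * δ ≤ C.card + 8 := by
  obtain ⟨y₁, hy₁, y₂, hy₂, hne, hle, hl2, hlong⟩ := OuterPiece.exists_long_paths hH3 h2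
  set X := attach G C H with hXdef
  set l := (nbr G H y₂).card with hldef
  have h3 := h.three_le
  have hXC : X ⊆ C := Finset.filter_subset _ _
  have hbd : bd G H H = ∅ := by
    ext w
    rw [mem_bd]
    simp only [Finset.notMem_empty, iff_false]
    tauto
  have hHne : H.Nonempty := ⟨y₁, hy₁⟩
  have hXne : X.Nonempty := by
    by_contra hemp
    rw [Finset.not_nonempty_iff_eq_empty] at hemp
    obtain ⟨v, hv⟩ := Finset.card_pos.1 (show 0 < C.card by omega)
    have := hH.kappa_le_attach (v := v) (Finset.Subset.refl H) hHne
      (fun hvH => hH.out v hvH hv) (by simp [hbd]) (by rw [← hXdef, hemp]; simp)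
    rw [hbd, ← hXdef, hemp] at this
    simp at this
    omega
  have hX4 : 4 ≤ X.card := by
    obtain ⟨p, hp⟩ := hXne
    have hσ : σ p ∉ X := by
      intro hσ
      obtain ⟨u, hu, hpu⟩ := (mem_attach.1 hp).2
      obtain ⟨v, hv, hqv⟩ := (mem_attach.1 hσ).2
      obtain ⟨m, hm⟩ := hH.conn u hu v hv
      have := h.detour_piece hH.out (hXC hp) (n := 1) (by omega) (by omega) hm hpu
        (by simpa using hqv.symm)
      omega
    have := hH.kappa_le_attach (v := σ p) (Finset.Subset.refl H) hHne
      (fun hvH => hH.out _ hvH (h.apply_mem_iff.2 (hXC hp))) (by simp [hbd]) hσ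
    rw [hbd, ← hXdef] at this
    simp at this
    omega
  have hXle := Finset.card_le_card hXC
  set R := switching G σ H X with hRdef
  have hRX : R ⊆ X := Finset.filter_subset _ _
  have hcount := h.count_gaps hH hXC (by omega) (fun p hp => (mem_attach.1 hp).2) hRX (l := l) (by
    intro p hp
    obtain ⟨hpX, hsw⟩ := Finset.mem_filter.1 hp
    obtain ⟨u, hu, hpu⟩ := (mem_attach.1 hpX).2
    obtain ⟨v, hv, hqv⟩ := (mem_attach.1 (h.gap_spec hXC hpX).2).2
    obtain ⟨u', hu', v', hv', huv'⟩ :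
        ∃ u' ∈ nbr G H p, ∃ v' ∈ nbr G H (nxt σ X p), u' ≠ v' := by
      by_contra! hall
      have hun : u ∈ nbr G H p := mem_nbr.2 ⟨hu, hpu⟩
      have hvn : v ∈ nbr G H (nxt σ X p) := mem_nbr.2 ⟨hv, hqv⟩
      refine hsw ⟨u, Finset.eq_singleton_iff_unique_mem.2 ⟨hun, fun w hw => ?_⟩,
        Finset.eq_singleton_iff_unique_mem.2 ⟨?_, fun w hw => (hall u hun w hw).symm⟩⟩
      · rw [hall w hw v hvn, hall u hun v hvn]
      · rw [hall u hun v hvn]; exact hvn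
    rw [mem_nbr] at hu' hv'
    obtain ⟨m, hm, hpath⟩ := hlong u' hu'.1 v' hv'.1 huv'
    exact ⟨u', v', m, hu'.2, hv'.2.symm, hm, hpath⟩)
  have hN : ∀ y ∈ H, nbr G C y ⊆ X := fun y hy w hw =>
    mem_attach.2 ⟨(mem_nbr.1 hw).1, y, hy, (mem_nbr.1 hw).2.symm⟩
  have hq : nbr G C y₁ ∩ nbr G C y₂ ⊆ R := by
    intro w hw
    have hw1 := (Finset.mem_inter.1 hw).1
    have hw2 := (Finset.mem_inter.1 hw).2
    refine Finset.mem_filter.2 ⟨hN _ hy₁ hw1, ?_⟩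
    rintro ⟨y, hy, -⟩
    have e1 : y₁ ∈ nbr G H w := mem_nbr.2 ⟨hy₁, (mem_nbr.1 hw1).2.symm⟩
    have e2 : y₂ ∈ nbr G H w := mem_nbr.2 ⟨hy₂, (mem_nbr.1 hw2).2.symm⟩
    rw [hy, Finset.mem_singleton] at e1 e2
    exact hne (e1.trans e2.symm)
  have hqr := Finset.card_le_card hq
  have hu := Finset.card_union_add_card_inter (nbr G C y₁) (nbr G C y₂)
  have hus := Finset.card_le_card (Finset.union_subset (hN _ hy₁) (hN _ hy₂))
  have d1 := (hδ y₁).trans (hH.le_card_nbr_add hy₁)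
  have d2 := (hδ y₂).trans (hH.le_card_nbr_add hy₂)
  have hlH : l + 1 ≤ H.card := by
    have : nbr G H y₂ ⊆ H.erase y₂ := by
      intro w hw
      have := mem_nbr.1 hw
      exact Finset.mem_erase.2 ⟨this.2.ne', this.1⟩
    have := Finset.card_le_card this
    rw [Finset.card_erase_of_mem hy₂] at this
    omega
  rcases Nat.lt_or_ge H.card 4 with hH4 | hH4
  · have : l = 2 := by omega
    rw [this] at hcount
    omega
  · have hr4 : 4 ≤ R.card := by
      by_contra hlt
      have := h.kappa_le_switching hH hXne (by rw [← hXdef, ← hRdef]; omega)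
        (by rw [← hXdef, ← hRdef]; omega)
      rw [← hXdef, ← hRdef] at this
      omega
    set q := (nbr G C y₁ ∩ nbr G C y₂).card
    rcases Nat.le_total q 4 with hq4 | hq4
    · have : l * 4 ≤ l * R.card := Nat.mul_le_mul_left _ hr4
      linarith
    · obtain ⟨a, ha⟩ := Nat.exists_eq_add_of_le hq4
      obtain ⟨b, hb⟩ := Nat.exists_eq_add_of_le hl2
      have : l * q ≤ l * R.card := Nat.mul_le_mul_left _ hqr
      have key : 2 * q + 4 * l ≤ l * q + 8 := by
        rw [ha, hb]
        nlinarith [Nat.zero_le (a * b)]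
      linarith

end

/-! ### Components with a cut vertex -/

section
open scoped Classical

set_option linter.unusedSectionVars false

variable [Fintype V] {G : SimpleGraph V} {σ : Equiv.Perm V} {C H T : Finset V} {u v x : V}

/-- A set with at most one boundary vertex contains an end block with long paths to its cut
vertex. -/
lemma OuterPiece.exists_endBlock (hH : OuterPiece G C H) (hT : T ⊆ H) (hne : T.Nonempty)
    (hx : x ∈ H) (hxT : x ∉ T) (hbd : (bd G H T).card ≤ 1) :
    ∃ Q ⊆ T, ∃ b, bd G H Q = {b} ∧ ∃ w ∈ Q, 1 ≤ (nbr G H w).card ∧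
      ∀ u ∈ Q, ∃ n ≥ (nbr G H w).card, PathIn G (insert b Q) u b n := by
  obtain ⟨Q, ⟨hQT, hQne, hQbd⟩, hmin⟩ := exists_min_card
    (P := fun Q => Q ⊆ T ∧ Q.Nonempty ∧ (bd G H Q).card ≤ 1) ⟨T, Finset.Subset.refl T, hne, hbd⟩
  have hQH := hQT.trans hT
  have hxQ : x ∉ Q := fun h => hxT (hQT h)
  obtain ⟨b, hb⟩ := Finset.card_eq_one.1
    (le_antisymm hQbd (Finset.card_pos.2 (hH.bd_nonempty hQH hQne hx hxQ)))
  obtain ⟨w, hw, hwmin⟩ := Q.exists_min_image (fun v => (nbr G H v).card) hQne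
  obtain ⟨hbH, hbQ, t, ht, htb⟩ := mem_bd.1 (show b ∈ bd G H Q by simp [hb])
  have hcl : ∀ s ∈ Q, ∀ y ∈ H, G.Adj s y → y ∈ insert b Q := by
    intro s hs y hy hsy
    rw [Finset.mem_insert]
    by_cases hyQ : y ∈ Q
    · exact Or.inr hyQ
    · refine Or.inl ?_
      have : y ∈ bd G H Q := mem_bd.2 ⟨hy, hyQ, s, hs, hsy⟩
      simpa [hb] using this
  refine ⟨Q, hQT, b, hb, w, hw, ?_, ?_⟩
  · obtain ⟨y, hy⟩ := hH.bd_nonempty (Q := {w}) (by simpa using hQH hw) (by simp) hx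
      (by
        rw [Finset.mem_singleton]
        rintro rfl
        exact hxQ hw)
    obtain ⟨h1, -, s, hs, hsy⟩ := mem_bd.1 hy
    rw [Finset.mem_singleton] at hs
    subst hs
    exact Finset.card_pos.2 ⟨y, mem_nbr.2 ⟨h1, hsy⟩⟩
  · intro u hu
    by_cases hQu : ∃ v ∈ Q, v ≠ u
    · obtain ⟨v, hv, hvu⟩ := hQu
      have hub : u ≠ b := fun h => hbQ (h ▸ hu)
      refine longPath G _ (insert b Q) u b b (by simp [hu]) (by simp) hub ?_ ?_
        ⟨v, by simp [hv], hvu, fun h => hbQ (h ▸ hv), fun _ h => hbQ (h ▸ hv)⟩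
      · intro S hS huS hbS hSne
        by_contra hlt
        have hSQ : S ⊆ Q := (Finset.subset_insert_iff_of_notMem hbS).1 hS
        have hsub : bd G H S ⊆ bd G (insert b Q) S := by
          intro y hy
          obtain ⟨h1, h2, s, hs, hsy⟩ := mem_bd.1 hy
          exact mem_bd.2 ⟨hcl s (hSQ hs) y h1 hsy, h2, s, hs, hsy⟩
        have := Finset.card_le_card hsub
        have := hmin S ⟨hSQ.trans hQT, hSne, by omega⟩
        have := Finset.card_lt_card (show S ⊂ Q from ⟨hSQ, fun h => huS (h hu)⟩)
        omega
      · intro v hv _ hvb _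
        have hvQ := (Finset.mem_insert.1 hv).resolve_left hvb
        refine (hwmin v hvQ).trans (Finset.card_le_card ?_)
        intro y hy
        rw [mem_nbr] at hy ⊢
        exact ⟨hcl v hvQ y hy.1 hy.2, hy.2⟩
    · push Not at hQu
      have hwu := hQu w hw
      have htu := hQu t ht
      subst hwu
      subst htu
      refine ⟨1, ?_, (PathIn.edge htb).mono ?_⟩
      · refine (Finset.card_le_card (t := {b}) ?_).trans (by simp)
        intro y hy
        rw [mem_nbr] at hy
        have h1 := hcl _ hw y hy.1 hy.2
        rw [Finset.mem_insert] at h1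
        rw [Finset.mem_singleton]
        refine h1.resolve_right fun hyQ => ?_
        exact hy.2.ne' (hQu y hyQ)
      · intro y hy
        simp only [Finset.mem_insert, Finset.mem_singleton] at hy ⊢
        rcases hy with rfl | rfl
        · exact Or.inr hw
        · exact Or.inl rfl

lemma OuterPiece.exists_pathIn_sdiff (hH : OuterPiece G C H) {Q₁ Q₂ : Finset V} {b₁ b₂ : V}
    (hQ₁ : Q₁ ⊆ H) (hb₁ : bd G H Q₁ = {b₁}) (hb₂ : bd G H Q₂ = {b₂})
    (hb₁Q : b₁ ∉ Q₂) (hb₂Q : b₂ ∉ Q₁) :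
    ∃ n, PathIn G (H \ (Q₁ ∪ Q₂)) b₁ b₂ n := by
  obtain ⟨h1, h2, -⟩ := mem_bd.1 (show b₁ ∈ bd G H Q₁ by simp [hb₁])
  obtain ⟨h3, h4, -⟩ := mem_bd.1 (show b₂ ∈ bd G H Q₂ by simp [hb₂])
  set H' := H \ (Q₁ ∪ Q₂) with hH'
  have hb₁H' : b₁ ∈ H' := by simp [*]
  have hR : b₁ ∈ reach G H' b₁ := self_mem_reach hb₁H'
  have hRs : reach G H' b₁ ⊆ H' := reach_subset
  by_cases hmem : b₂ ∈ reach G H' b₁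
  · obtain ⟨n, hn⟩ := exists_pathIn_reach hR hmem
    exact ⟨n, hn.mono hRs⟩
  · exfalso
    obtain ⟨y, hy⟩ := hH.bd_nonempty (Q := reach G H' b₁ ∪ Q₁)
      (Finset.union_subset (hRs.trans Finset.sdiff_subset) hQ₁) ⟨b₁, by simp [hR]⟩ h3
      (by simp [hmem, hb₂Q])
    obtain ⟨hyH, hyn, t, ht, hty⟩ := mem_bd.1 hy
    simp only [Finset.mem_union, not_or] at hyn ht
    rcases ht with ht | ht
    · have hyQ : y ∈ Q₂ := by
        by_contra hyQ
        exact hyn.1 (mem_reach_of_adj ht hty (by simp [*]))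
      have htH := hRs ht
      simp only [hH', Finset.mem_sdiff, Finset.mem_union, not_or] at htH
      have : t ∈ bd G H Q₂ := mem_bd.2 ⟨htH.1, htH.2.2, y, hyQ, hty.symm⟩
      rw [hb₂, Finset.mem_singleton] at this
      exact hmem (this ▸ ht)
    · have : y ∈ bd G H Q₁ := mem_bd.2 ⟨hyH, hyn.2, t, ht, hty⟩
      rw [hb₁, Finset.mem_singleton] at this
      exact hyn.1 (this ▸ hR)

lemma LongestCycle.length_of_not_twoBd (h : LongestCycle G σ C) (hH : OuterPiece G C H)
    (h4 : 4 ≤ kappa G) {δ : ℕ} (hδ : ∀ v, δ ≤ (nbr G Finset.univ v).card)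
    {x z : V} (hx : x ∈ H) (hz : z ∈ H) (hxz : x ≠ z) (h2 : ¬ TwoBd G H x z) :
    4 * δ ≤ C.card + 8 := by
  unfold TwoBd at h2
  push Not at h2
  obtain ⟨T, hT, hxT, hzT, hTne, hlt⟩ := h2
  set T₂ := (H \ T) \ bd G H T with hT₂
  have hT₂H : T₂ ⊆ H := Finset.sdiff_subset.trans Finset.sdiff_subset
  have hT₂ne : T₂.Nonempty := by
    by_cases hxb : x ∈ bd G H T
    · refine ⟨z, ?_⟩
      have : z ∉ bd G H T := fun hzb => hxz (Finset.card_le_one.1 (by omega) x hxb z hzb)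
      simp [*]
    · exact ⟨x, by simp [*]⟩
  have hTT₂ : ∀ t ∈ T, t ∉ T₂ := fun t ht => by simp [hT₂, ht]
  have hnoadj : ∀ t ∈ T, ∀ s ∈ T₂, ¬ G.Adj t s := by
    intro t ht s hs hts
    simp only [hT₂, Finset.mem_sdiff] at hs
    exact hs.2 (mem_bd.2 ⟨hs.1.1, hs.1.2, t, ht, hts⟩)
  have hbdT₂ : (bd G H T₂).card ≤ 1 := by
    refine (Finset.card_le_card (t := bd G H T) ?_).trans (by omega)
    intro y hy
    obtain ⟨h1, h2, t, ht, hty⟩ := mem_bd.1 hy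
    by_contra hyb
    have hyT : y ∈ T := by
      by_contra hyT
      exact h2 (by simp [*])
    exact hnoadj y hyT t ht hty.symm
  obtain ⟨t₀, ht₀⟩ := hTne
  obtain ⟨s₀, hs₀⟩ := hT₂ne
  obtain ⟨Q₁, hQ₁T, b₁, hb₁, w₁, hw₁, hk₁, hpath₁⟩ :=
    hH.exists_endBlock hT ⟨t₀, ht₀⟩ hx hxT (by omega)
  obtain ⟨Q₂, hQ₂T, b₂, hb₂, w₂, hw₂, hk₂, hpath₂⟩ :=
    hH.exists_endBlock hT₂H ⟨s₀, hs₀⟩ (hT ht₀) (hTT₂ _ ht₀) hbdT₂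
  have hQ₁H := hQ₁T.trans hT
  have hQ₂H := hQ₂T.trans hT₂H
  have hQQ : ∀ y ∈ Q₁, y ∉ Q₂ := fun y h1 h2 => hTT₂ y (hQ₁T h1) (hQ₂T h2)
  obtain ⟨hb₁H, hb₁Q₁, t₁, ht₁, htb₁⟩ := mem_bd.1 (show b₁ ∈ bd G H Q₁ by simp [hb₁])
  obtain ⟨hb₂H, hb₂Q₂, t₂, ht₂, htb₂⟩ := mem_bd.1 (show b₂ ∈ bd G H Q₂ by simp [hb₂])
  have hb₁Q₂ : b₁ ∉ Q₂ := fun hb => hnoadj t₁ (hQ₁T ht₁) b₁ (hQ₂T hb) htb₁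
  have hb₂Q₁ : b₂ ∉ Q₁ := fun hb => hnoadj b₂ (hQ₁T hb) t₂ (hQ₂T ht₂) htb₂.symm
  obtain ⟨n₀, hmid⟩ := hH.exists_pathIn_sdiff hQ₁H hb₁ hb₂ hb₁Q₂ hb₂Q₁
  set K := (nbr G H w₁).card + (nbr G H w₂).card with hK
  have hlong : ∀ u₁ ∈ Q₁, ∀ u₂ ∈ Q₂, ∃ m ≥ K, PathIn G H u₁ u₂ m := by
    intro u₁ hu₁ u₂ hu₂
    obtain ⟨n₁, hn₁, p₁⟩ := hpath₁ u₁ hu₁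
    obtain ⟨n₂, hn₂, p₂⟩ := hpath₂ u₂ hu₂
    have q₁ := p₁.append hmid (by
      intro y hy hy'
      simp only [Finset.mem_insert, Finset.mem_sdiff, Finset.mem_union, not_or] at hy hy'
      tauto)
    have q₂ := q₁.append p₂.symm (by
      intro y hy hy'
      have := hQQ y
      simp only [Finset.mem_insert, Finset.mem_sdiff, Finset.mem_union, not_or] at hy hy'
      rcases hy' with hy' | hy'
      · exact hy'
      · rcases hy with (rfl | hy) | hy <;> tauto)
    refine ⟨_, by omega, q₂.mono ?_⟩
    intro y hy
    simp only [Finset.mem_insert, Finset.mem_sdiff, Finset.mem_union] at hy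
    rcases hy with ((rfl | hy) | hy) | (rfl | hy)
    · exact hb₁H
    · exact hQ₁H hy
    · exact hy.1
    · exact hb₂H
    · exact hQ₂H hy
  set X₁ := attach G C Q₁ with hX₁
  set X₂ := attach G C Q₂ with hX₂
  have hX₁C : X₁ ⊆ C := Finset.filter_subset _ _
  have hX₂C : X₂ ⊆ C := Finset.filter_subset _ _
  set X := X₁ ∪ X₂ with hX
  have hXC : X ⊆ C := Finset.union_subset hX₁C hX₂C
  have hnotatt : ∀ {y Q}, y ∈ H → y ∉ attach G C Q := fun hy hya =>
    hH.out _ hy (mem_attach.1 hya).1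
  have hc₁ : 3 ≤ X₁.card := by
    have := hH.kappa_le_attach (v := w₂) hQ₁H ⟨w₁, hw₁⟩ (fun hw => hQQ _ hw hw₂) (by
      rw [hb₁, Finset.mem_singleton]
      rintro rfl
      exact hb₁Q₂ hw₂) (hnotatt (hQ₂H hw₂))
    rw [hb₁, ← hX₁] at this
    simp at this
    omega
  have hc₂ : 3 ≤ X₂.card := by
    have := hH.kappa_le_attach (v := w₁) hQ₂H ⟨w₂, hw₂⟩ (fun hw => hQQ _ hw₁ hw) (by
      rw [hb₂, Finset.mem_singleton]
      rintro rfl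
      exact hb₂Q₁ hw₁) (hnotatt (hQ₁H hw₁))
    rw [hb₂, ← hX₂] at this
    simp at this
    omega
  have hXX : X.card + (X₁ ∩ X₂).card = X₁.card + X₂.card :=
    Finset.card_union_add_card_inter X₁ X₂
  have hle₁ : X₁.card ≤ X.card := Finset.card_le_card Finset.subset_union_left
  set R := X.filter fun p => (p ∈ X₁ ∧ nxt σ X p ∈ X₂) ∨ (p ∈ X₂ ∧ nxt σ X p ∈ X₁) with hR
  have hcount := h.count_gaps hH hXC (by omega) (by
      intro p hp
      rcases Finset.mem_union.1 hp with hp | hp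
      · obtain ⟨-, u, hu, hpu⟩ := mem_attach.1 hp
        exact ⟨u, hQ₁H hu, hpu⟩
      · obtain ⟨-, u, hu, hpu⟩ := mem_attach.1 hp
        exact ⟨u, hQ₂H hu, hpu⟩) (R := R) (Finset.filter_subset _ _) (l := K) (by
      intro p hp
      rcases (Finset.mem_filter.1 hp).2 with ⟨h1, h2⟩ | ⟨h1, h2⟩
      · obtain ⟨-, u, hu, hpu⟩ := mem_attach.1 h1
        obtain ⟨-, v, hv, hqv⟩ := mem_attach.1 h2
        obtain ⟨m, hm, hp⟩ := hlong u hu v hv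
        exact ⟨u, v, m, hpu, hqv.symm, hm, hp⟩
      · obtain ⟨-, u, hu, hpu⟩ := mem_attach.1 h1
        obtain ⟨-, v, hv, hqv⟩ := mem_attach.1 h2
        obtain ⟨m, hm, hp⟩ := hlong v hv u hu
        exact ⟨u, v, m, hpu, hqv.symm, hm, hp.symm⟩)
  have hqr : (X₁ ∩ X₂).card ≤ R.card := by
    refine Finset.card_le_card fun p hp => ?_
    have hp' := Finset.mem_inter.1 hp
    have hpX : p ∈ X := Finset.mem_union_left _ hp'.1
    have := Finset.mem_union.1 (h.gap_spec hXC hpX).2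
    exact Finset.mem_filter.2 ⟨hpX, by tauto⟩
  have hr2 : (X₁ ∩ X₂).card ≤ 1 → 2 ≤ R.card := by
    intro hq1
    have hcross : ∀ Y Z : Finset V, Y ∪ Z = X → Y.Nonempty → ¬ X ⊆ Y →
        ∃ p ∈ Y, nxt σ X p ∈ Z ∧ nxt σ X p ∉ Y := by
      intro Y Z hYZ hY hXY
      by_contra! hall
      have hYX : Y ⊆ X := hYZ ▸ Finset.subset_union_left
      refine hXY (h.subset_of_nxt_closed hXC hYX hY fun p hp => ?_)
      by_contra hn
      have hm := (h.gap_spec hXC (hYX hp)).2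
      have hm' : nxt σ X p ∈ Y ∪ Z := hYZ.symm ▸ hm
      exact hn (hall p hp ((Finset.mem_union.1 hm').resolve_left hn))
    obtain ⟨p, hp, hpn, hpn'⟩ := hcross X₁ X₂ rfl (Finset.card_pos.1 (by omega)) (by
      intro hs
      have := Finset.card_le_card hs
      omega)
    obtain ⟨p', hp', hpm, hpm'⟩ := hcross X₂ X₁ (Finset.union_comm _ _)
      (Finset.card_pos.1 (by omega)) (by
      intro hs
      have := Finset.card_le_card hs
      omega)
    have hne : p ≠ p' := by
      rintro rfl
      exact hpn' hpm
    rw [← Finset.card_pair hne]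
    refine Finset.card_le_card ?_
    intro y hy
    simp only [Finset.mem_insert, Finset.mem_singleton] at hy
    rcases hy with rfl | rfl
    · exact Finset.mem_filter.2 ⟨Finset.mem_union_left _ hp, Or.inl ⟨hp, hpn⟩⟩
    · exact Finset.mem_filter.2 ⟨Finset.mem_union_right _ hp', Or.inr ⟨hp', hpm⟩⟩
  have hN : ∀ {Q w}, w ∈ Q → (nbr G C w).card ≤ (attach G C Q).card := fun hw =>
    Finset.card_le_card fun y hy =>
      mem_attach.2 ⟨(mem_nbr.1 hy).1, _, hw, (mem_nbr.1 hy).2.symm⟩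
  have e₁ := hN hw₁
  have e₂ := hN hw₂
  have d₁ := (hδ w₁).trans (hH.le_card_nbr_add (hQ₁H hw₁))
  have d₂ := (hδ w₂).trans (hH.le_card_nbr_add (hQ₂H hw₂))
  rw [← hX₁] at e₁
  rw [← hX₂] at e₂
  set q := (X₁ ∩ X₂).card
  have hK2 : 2 ≤ K := by omega
  have key : 2 * q + 2 * K ≤ K * R.card + 8 := by
    rcases Nat.le_total q 1 with hq | hq
    · have : K * 2 ≤ K * R.card := Nat.mul_le_mul_left _ (hr2 hq)
      linarith
    · obtain ⟨a, ha⟩ := Nat.exists_eq_add_of_le hq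
      obtain ⟨b, hb⟩ := Nat.exists_eq_add_of_le hK2
      rcases Nat.eq_zero_or_pos a with h0 | h0
      · have : K * 2 ≤ K * R.card := Nat.mul_le_mul_left _ (hr2 (by omega))
        linarith
      · have : K * q ≤ K * R.card := Nat.mul_le_mul_left _ hqr
        have : 2 * q + 2 * K ≤ K * q + 8 := by
          rw [ha, hb]
          nlinarith [Nat.mul_le_mul_left b h0]
        linarith
  linarith

/-- A long component outside a longest cycle forces the cycle to be long. -/
theorem LongestCycle.length_of_outerPiece (h : LongestCycle G σ C) (hH : OuterPiece G C H)
    (h4 : 4 ≤ kappa G) {δ : ℕ} (hδ : ∀ v, δ ≤ (nbr G Finset.univ v).card) (hH3 : 3 ≤ H.card) :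
    4 * δ ≤ C.card + 8 := by
  by_cases h2 : ∀ x ∈ H, ∀ z ∈ H, x ≠ z → TwoBd G H x z
  · exact h.length_of_twoBd hH h4 hδ hH3 h2
  · push Not at h2
    obtain ⟨x, hx, z, hz, hxz, h2⟩ := h2
    exact h.length_of_not_twoBd hH h4 hδ hx hz hxz h2

end

/-! ### Two adjacent vertices outside a longest cycle -/

section
open scoped Classical

set_option linter.unusedSectionVars false

variable [Fintype V] {G : SimpleGraph V} {σ : Equiv.Perm V} {C : Finset V}
  {x y p q u v w : V} {a b n L δ : ℕ}

/-- The neighbours on `C` of `x` or `y`. -/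
noncomputable def feet (G : SimpleGraph V) (C : Finset V) (x y : V) : Finset V :=
  nbr G C x ∪ nbr G C y

/-- The common neighbours on `C` of `x` and `y`. -/
noncomputable def bifeet (G : SimpleGraph V) (C : Finset V) (x y : V) : Finset V :=
  nbr G C x ∩ nbr G C y

/-- The successors of the feet and the second successors of the common feet. -/
noncomputable def markers (σ : Equiv.Perm V) (G : SimpleGraph V) (C : Finset V) (x y : V) :
    Finset V :=
  (feet G C x y).image σ ∪ (bifeet G C x y).image fun p => σ (σ p)

/-- `xy` is an edge outside the longest cycle `C`, and every vertex outside `C` has at most one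
neighbour outside `C`. -/
structure OuterEdge (G : SimpleGraph V) (σ : Equiv.Perm V) (C : Finset V) (x y : V) (δ : ℕ) :
    Prop where
  lc : LongestCycle G σ C
  left : x ∉ C
  right : y ∉ C
  adj : G.Adj x y
  four_le : 4 ≤ kappa G
  degree : ∀ v, δ ≤ (nbr G Finset.univ v).card
  outer_le_one : ∀ w, w ∉ C → (nbr G Cᶜ w).card ≤ 1

lemma mem_feet : p ∈ feet G C x y ↔ p ∈ C ∧ (G.Adj x p ∨ G.Adj y p) := by
  simp only [feet, Finset.mem_union, mem_nbr]
  tauto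

lemma mem_bifeet : p ∈ bifeet G C x y ↔ p ∈ C ∧ G.Adj x p ∧ G.Adj y p := by
  simp only [bifeet, Finset.mem_inter, mem_nbr]
  tauto

lemma mem_markers : v ∈ markers σ G C x y ↔ ∃ p ∈ feet G C x y, ∃ b, 0 < b ∧ b ≤ 2 ∧
    (b = 2 → p ∈ bifeet G C x y) ∧ (σ ^ b) p = v := by
  simp only [markers, Finset.mem_union, Finset.mem_image]
  constructor
  · rintro (⟨p, hp, rfl⟩ | ⟨p, hp, rfl⟩)
    · exact ⟨p, hp, 1, by omega, by omega, by omega, by simp⟩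
    · have := mem_bifeet.1 hp
      exact ⟨p, mem_feet.2 ⟨this.1, Or.inl this.2.1⟩, 2, by omega, by omega, fun _ => hp,
        by simp [pow_two]⟩
  · rintro ⟨p, hp, b, h0, h2, hb, rfl⟩
    obtain rfl | rfl : b = 1 ∨ b = 2 := by omega
    · exact Or.inl ⟨p, hp, by simp⟩
    · exact Or.inr ⟨p, hb rfl, by simp [pow_two]⟩

lemma apply_mem_markers (hp : p ∈ feet G C x y) : σ p ∈ markers σ G C x y :=
  Finset.mem_union_left _ (Finset.mem_image_of_mem _ hp)

lemma card_nbr_univ_le (C : Finset V) (v : V) :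
    (nbr G Finset.univ v).card ≤ (nbr G C v).card + (nbr G Cᶜ v).card := by
  refine (Finset.card_le_card fun w hw => ?_).trans (Finset.card_union_le _ _)
  have := (mem_nbr.1 hw).2
  simp only [Finset.mem_union, mem_nbr, Finset.mem_compl]
  tauto

namespace OuterEdge

lemma symm (e : OuterEdge G σ C x y δ) : OuterEdge G σ C y x δ where
  lc := e.lc
  left := e.right
  right := e.left
  adj := e.adj.symm
  four_le := e.four_le
  degree := e.degree
  outer_le_one := e.outer_le_one

lemma markers_subset (e : OuterEdge G σ C x y δ) : markers σ G C x y ⊆ C := by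
  intro v hv
  obtain ⟨p, hp, b, -, -, -, rfl⟩ := mem_markers.1 hv
  exact e.lc.pow_mem (mem_feet.1 hp).1 b

/-- Two feet are joined by a path through `x` and `y`. -/
lemma exists_pathIn (e : OuterEdge G σ C x y δ) (hp : p ∈ feet G C x y) (hq : q ∈ feet G C x y)
    (hpq : p ≠ q) : ∃ L, 2 ≤ L ∧ (p ∈ bifeet G C x y ∨ q ∈ bifeet G C x y → 3 ≤ L) ∧
      PathIn G (insert p (insert q {x, y})) p q L := by
  have hp' := mem_feet.1 hp
  have hq' := mem_feet.1 hq
  have hout : ∀ r ∈ C, r ∉ ({x, y} : Finset V) := by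
    intro r hr hm
    simp only [Finset.mem_insert, Finset.mem_singleton] at hm
    rcases hm with rfl | rfl
    · exact e.left hr
    · exact e.right hr
  have hP := hout p hp'.1
  have hQ := hout q hq'.1
  by_cases h1 : G.Adj x p ∧ G.Adj y q
  · exact ⟨3, by omega, fun _ => le_rfl, (PathIn.edge e.adj).link h1.1.symm h1.2 hP hQ hpq⟩
  by_cases h2 : G.Adj y p ∧ G.Adj x q
  · exact ⟨3, by omega, fun _ => le_rfl, (PathIn.edge e.adj).symm.link h2.1.symm h2.2 hP hQ hpq⟩
  refine ⟨2, le_rfl, fun h => ?_, ?_⟩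
  · rw [mem_bifeet, mem_bifeet] at h
    tauto
  · have : (G.Adj x p ∧ G.Adj x q) ∨ (G.Adj y p ∧ G.Adj y q) := by tauto
    rcases this with h | h
    · exact (PathIn.nil (by simp)).link h.1.symm h.2 hP hQ hpq
    · exact (PathIn.nil (by simp)).link h.1.symm h.2 hP hQ hpq

lemma eq_of_mem (e : OuterEdge G σ C x y δ) {z : V}
    (hz : z ∈ insert p (insert q ({x, y} : Finset V))) (hzC : z ∈ C) : z = p ∨ z = q := by
  simp only [Finset.mem_insert, Finset.mem_singleton] at hz
  rcases hz with rfl | rfl | rfl | rfl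
  · exact Or.inl rfl
  · exact Or.inr rfl
  · exact absurd hzC e.left
  · exact absurd hzC e.right

lemma dist_feet (e : OuterEdge G σ C x y δ) (hp : p ∈ feet G C x y) (hn : 0 < n)
    (hn' : n < C.card) (hq : (σ ^ n) p ∈ feet G C x y) :
    2 ≤ n ∧ (p ∈ bifeet G C x y ∨ (σ ^ n) p ∈ bifeet G C x y → 3 ≤ n) := by
  have hpC := (mem_feet.1 hp).1
  obtain ⟨L, h2, h3, hL⟩ := e.exists_pathIn hp hq (e.lc.pow_ne hpC hn hn').symm
  have := e.lc.detour_le hpC hn hn' hL fun z hz hzC => e.eq_of_mem hz hzC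
  exact ⟨by omega, fun h => (h3 h).trans this⟩

lemma not_mem_feet (e : OuterEdge G σ C x y δ) (hv : v ∈ markers σ G C x y) :
    v ∉ feet G C x y := by
  intro hf
  obtain ⟨p, hp, b, h0, h2, hb, rfl⟩ := mem_markers.1 hv
  have h3 := e.lc.three_le
  obtain ⟨h, h'⟩ := e.dist_feet hp h0 (by omega) hf
  have := h' (Or.inl (hb (by omega)))
  omega

lemma not_adj_left (e : OuterEdge G σ C x y δ) (hv : v ∈ markers σ G C x y) : ¬ G.Adj x v :=
  fun h => e.not_mem_feet hv (mem_feet.2 ⟨e.markers_subset hv, Or.inl h⟩)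

lemma not_adj_right (e : OuterEdge G σ C x y δ) (hv : v ∈ markers σ G C x y) : ¬ G.Adj y v :=
  fun h => e.not_mem_feet hv (mem_feet.2 ⟨e.markers_subset hv, Or.inr h⟩)

/-- A path between markers with different feet which avoids `x`, `y` and `C` is short. -/
lemma length_le_of_markers (e : OuterEdge G σ C x y δ) (hp : p ∈ feet G C x y)
    (hq : q ∈ feet G C x y) (hpq : p ≠ q) (ha : 0 < a) (ha' : a ≤ 2) (hb : 0 < b) (hb' : b ≤ 2)
    (hap : a = 2 → p ∈ bifeet G C x y) (hbq : b = 2 → q ∈ bifeet G C x y) {D : Finset V}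
    (hD : PathIn G D ((σ ^ a) p) ((σ ^ b) q) L)
    (hDC : ∀ z ∈ D, z ∈ C → z = (σ ^ a) p ∨ z = (σ ^ b) q) (hx : x ∉ D) (hy : y ∉ D) :
    L + 2 ≤ a + b ∧ (a = 2 ∨ b = 2 → L + 3 ≤ a + b) := by
  have hpC := (mem_feet.1 hp).1
  have hqC := (mem_feet.1 hq).1
  have hu : (σ ^ a) p ∉ feet G C x y :=
    e.not_mem_feet (mem_markers.2 ⟨p, hp, a, ha, ha', hap, rfl⟩)
  have hv : (σ ^ b) q ∉ feet G C x y :=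
    e.not_mem_feet (mem_markers.2 ⟨q, hq, b, hb, hb', hbq, rfl⟩)
  obtain ⟨n, hn, hn', rfl⟩ := e.lc.exists_pow_pos hpC hqC hpq
  obtain ⟨L₁, h2, h3, h₁⟩ := e.exists_pathIn hp hq hpq
  have hback : (σ ^ (C.card - n)) ((σ ^ n) p) = p := by
    rw [← Equiv.Perm.mul_apply, ← pow_add, Nat.sub_add_cancel hn'.le, e.lc.pow_card hpC]
  have d1 := e.dist_feet hp hn hn' hq
  have d2 := e.dist_feet hq (n := C.card - n) (by omega) (by omega) (by rwa [hback])
  have e1 : n + b < C.card := by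
    rcases Nat.lt_or_ge b 2 with h | h
    · have := d2.1
      omega
    · have := d2.2 (Or.inl (hbq (by omega)))
      omega
  have hadd : (σ ^ b) ((σ ^ n) p) = (σ ^ (n + b)) p := by
    rw [← Equiv.Perm.mul_apply, ← pow_add, add_comm]
  rw [hadd] at hD hDC hv
  have key := e.lc.crossing_le hpC ha (ha'.trans d1.1) hb e1 h₁ hD
    (fun z hz hzC => e.eq_of_mem hz hzC) hDC (by
      intro z hz hzD
      simp only [Finset.mem_insert, Finset.mem_singleton] at hz
      rcases hz with rfl | rfl | rfl | rfl
      · rcases hDC _ hzD hpC with h | h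
        · rw [← h] at hu
          exact hu hp
        · rw [← h] at hv
          exact hv hp
      · rcases hDC _ hzD hqC with h | h
        · rw [← h] at hu
          exact hu hq
        · rw [← h] at hv
          exact hv hq
      · exact hx hzD
      · exact hy hzD)
  refine ⟨by omega, fun h => ?_⟩
  have := h3 (h.imp hap hbq)
  omega

lemma adj_marker (e : OuterEdge G σ C x y δ) (hp : p ∈ feet G C x y)
    (hv : v ∈ markers σ G C x y) (h : G.Adj (σ p) v) : v = σ (σ p) ∧ p ∈ bifeet G C x y := by
  have hvC := e.markers_subset hv
  obtain ⟨q, hq, b, hb, hb', hbq, rfl⟩ := mem_markers.1 hv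
  by_cases hpq : p = q
  · subst hpq
    obtain rfl | rfl : b = 1 ∨ b = 2 := by omega
    · exact absurd h (by simp)
    · exact ⟨by simp [pow_two], hbq rfl⟩
  · have hpC := e.lc.apply_mem_iff.2 (mem_feet.1 hp).1
    have := e.length_le_of_markers hp hq hpq (a := 1) (by omega) (by omega) hb hb' (by omega) hbq
      (L := 1) (D := {σ p, (σ ^ b) q}) (PathIn.edge h) (by simp) (by
        simp only [Finset.mem_insert, Finset.mem_singleton]
        rintro (rfl | rfl)
        · exact e.left hpC
        · exact e.left hvC) (by
        simp only [Finset.mem_insert, Finset.mem_singleton]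
        rintro (rfl | rfl)
        · exact e.right hpC
        · exact e.right hvC)
    obtain ⟨h1, h2⟩ := this
    have := h2 (by omega)
    omega

lemma eq_of_common_nbr (e : OuterEdge G σ C x y δ) (hw : w ∉ C) (hwx : w ≠ x) (hwy : w ≠ y)
    (hu : u ∈ markers σ G C x y) (hv : v ∈ markers σ G C x y) (hwu : G.Adj w u)
    (hwv : G.Adj w v) : u = v := by
  by_contra hne
  have huC := e.markers_subset hu
  have hvC := e.markers_subset hv
  have hpath : ∀ u v : V, G.Adj w u → G.Adj w v → u ≠ v → u ∈ C → v ∈ C →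
      PathIn G (insert u (insert v {w})) u v 2 := by
    intro u v hu hv hne huC hvC
    exact (PathIn.nil (by simp)).link hu.symm hv (by simp; rintro rfl; exact hw huC)
      (by simp; rintro rfl; exact hw hvC) hne
  have hmeet : ∀ u v z : V, z ∈ (insert u (insert v {w}) : Finset V) → z ∈ C → z = u ∨ z = v := by
    intro u v z hz hzC
    simp only [Finset.mem_insert, Finset.mem_singleton] at hz
    rcases hz with h | h | rfl
    · exact Or.inl h
    · exact Or.inr h
    · exact absurd hzC hw
  have hP := hpath u v hwu hwv hne huC hvC
  obtain ⟨p, hp, a, ha, ha', hap, rfl⟩ := mem_markers.1 hu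
  obtain ⟨q, hq, b, hb, hb', hbq, rfl⟩ := mem_markers.1 hv
  by_cases hpq : p = q
  · subst hpq
    have hpC := e.lc.apply_mem_iff.2 (mem_feet.1 hp).1
    have h3 := e.lc.three_le
    have key : PathIn G (insert (σ p) (insert ((σ ^ 1) (σ p)) {w})) (σ p) ((σ ^ 1) (σ p)) 2 := by
      have e1 : (σ ^ 1) p = σ p := by simp
      have e2 : (σ ^ 2) p = (σ ^ 1) (σ p) := by simp [pow_two]
      have hab : a ≠ b := by
        rintro rfl
        exact hne rfl
      obtain ⟨rfl, rfl⟩ | ⟨rfl, rfl⟩ : (a = 1 ∧ b = 2) ∨ (a = 2 ∧ b = 1) := by omega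
      · rwa [e1, e2] at hP
      · have := hpath _ _ hwv hwu (Ne.symm hne) hvC huC
        rwa [e1, e2] at this
    have := e.lc.detour_le hpC (n := 1) (by omega) (by omega) key (hmeet _ _)
    omega
  · have := e.length_le_of_markers hp hq hpq ha ha' hb hb' hap hbq hP (hmeet _ _) (by
        simp only [Finset.mem_insert, Finset.mem_singleton]
        rintro (h | h | h)
        · exact e.left (h ▸ huC)
        · exact e.left (h ▸ hvC)
        · exact hwx h.symm) (by
        simp only [Finset.mem_insert, Finset.mem_singleton]
        rintro (h | h | h)
        · exact e.right (h ▸ huC)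
        · exact e.right (h ▸ hvC)
        · exact hwy h.symm)
    obtain ⟨h1, h2⟩ := this
    have := h2 (by omega)
    omega

lemma card_nbr_add_le (e : OuterEdge G σ C x y δ) : δ ≤ (nbr G C x).card + 1 :=
  (e.degree x).trans ((card_nbr_univ_le C x).trans
    (Nat.add_le_add_left (e.outer_le_one x e.left) _))

lemma le_card_markers (e : OuterEdge G σ C x y δ) : 2 * δ ≤ (markers σ G C x y).card + 2 := by
  have h1 := e.card_nbr_add_le
  have h2 := e.symm.card_nbr_add_le
  have h3 := Finset.card_union_add_card_inter (nbr G C x) (nbr G C y)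
  have h4 : (markers σ G C x y).card = (feet G C x y).card + (bifeet G C x y).card := by
    rw [markers, Finset.card_union_of_disjoint, Finset.card_image_of_injective _ σ.injective,
      Finset.card_image_of_injective (f := fun p => σ (σ p)) _
        (σ.injective.comp σ.injective)]
    rw [Finset.disjoint_left]
    intro v h h'
    obtain ⟨p, hp, rfl⟩ := Finset.mem_image.1 h
    obtain ⟨q, hq, hqp⟩ := Finset.mem_image.1 h'
    have hq' := mem_bifeet.1 hq
    have := σ.injective hqp
    exact e.not_mem_feet (apply_mem_markers (mem_feet.2 ⟨hq'.1, Or.inl hq'.2.1⟩)) (this ▸ hp)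
  simp only [feet, bifeet] at h4
  omega

end OuterEdge

end

/-! ### Long cycles from an edge outside a longest cycle -/

section
open scoped Classical

set_option linter.unusedSectionVars false

variable [Fintype V] {G : SimpleGraph V} {σ : Equiv.Perm V} {C S A B P Q : Finset V}
  {x y p q u v w : V} {o δ : ℕ}

namespace MinCut

lemma mem_of_adj_left (c : MinCut G S A B) (hv : v ∈ A) (h : G.Adj v w) : w ∈ A ∨ w ∈ S := by
  rcases c.cover w with hw | hw | hw
  · exact Or.inl hw
  · exact absurd h (c.not_adj v hv w hw)
  · exact Or.inr hw

lemma mem_of_adj_right (c : MinCut G S A B) (hv : v ∈ B) (h : G.Adj v w) : w ∈ B ∨ w ∈ S :=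
  c.symm.mem_of_adj_left hv h

end MinCut

lemma card_inter_add_card_sdiff_le (c : MinCut G S A B) :
    (S ∩ C).card + (S \ C).card = kappa G := by
  rw [← c.card, add_comm]
  exact Finset.card_sdiff_add_card_inter S C

namespace OuterEdge

lemma le_card_nbr_sdiff (e : OuterEdge G σ C x y δ)
    (h : ∀ u ∈ markers σ G C x y, ∀ v ∈ markers σ G C x y, G.Adj w u → G.Adj w v → u = v) :
    δ ≤ (nbr G C w \ markers σ G C x y).card + 1 + (nbr G Cᶜ w).card := by
  have h1 : (nbr G C w ∩ markers σ G C x y).card ≤ 1 := by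
    refine Finset.card_le_one.2 fun u hu v hv => ?_
    simp only [Finset.mem_inter, mem_nbr] at hu hv
    exact h u hu.2 v hv.2 hu.1.2 hv.1.2
  have h2 := Finset.card_sdiff_add_card_inter (nbr G C w) (markers σ G C x y)
  have h3 := (e.degree w).trans (card_nbr_univ_le C w)
  omega

lemma le_card_nbr_sdiff_of_not_mem (e : OuterEdge G σ C x y δ) (hw : w ∉ C) (hwx : w ≠ x)
    (hwy : w ≠ y) : δ ≤ (nbr G C w \ markers σ G C x y).card + 1 + (nbr G Cᶜ w).card :=
  e.le_card_nbr_sdiff fun _ hu _ hv h h' => e.eq_of_common_nbr hw hwx hwy hu hv h h'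

lemma le_card_nbr_sdiff_of_feet (e : OuterEdge G σ C x y δ) (hp : p ∈ feet G C x y) :
    δ ≤ (nbr G C (σ p) \ markers σ G C x y).card + 1 + (nbr G Cᶜ (σ p)).card :=
  e.le_card_nbr_sdiff fun _ hu _ hv h h' =>
    (e.adj_marker hp hu h).1.trans (e.adj_marker hp hv h').1.symm

lemma card_add_card_add_card_le (e : OuterEdge G σ C x y δ) (c : MinCut G S A B)
    (hP : P ⊆ C \ markers σ G C x y) (hQ : Q ⊆ C \ markers σ G C x y) (hPB : ∀ v ∈ P, v ∉ B)
    (hQA : ∀ v ∈ Q, v ∉ A) :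
    (markers σ G C x y).card + P.card + Q.card ≤ C.card + (P ∩ Q).card ∧ P ∩ Q ⊆ S ∩ C := by
  constructor
  · have h1 := Finset.card_union_add_card_inter P Q
    have h2 := Finset.card_le_card (Finset.union_subset hP hQ)
    have h3 := Finset.card_sdiff_add_card_eq_card e.markers_subset
    omega
  · intro v hv
    obtain ⟨h1, h2⟩ := Finset.mem_inter.1 hv
    refine Finset.mem_inter.2 ⟨?_, (Finset.mem_sdiff.1 (hP h1)).1⟩
    rcases c.cover v with h | h | h
    · exact absurd h (hQA v h2)
    · exact absurd h (hPB v h1)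
    · exact h

/-- A side of a minimum cut inside `C` with no successor of a foot forces the cycle to be long. -/
lemma length_of_side (e : OuterEdge G σ C x y δ) (c : MinCut G S A B) (hBC : B ⊆ C)
    (hB : ∀ p ∈ feet G C x y, σ p ∉ B) (hP : P ⊆ C \ markers σ G C x y) (hPB : ∀ v ∈ P, v ∉ B)
    (hPo : δ ≤ P.card + 1 + o) (ho : o + 2 ≤ kappa G)
    (ho' : (S ∩ C).Nonempty → o + 3 ≤ kappa G) : 4 * δ ≤ C.card + 2 * kappa G := by
  set M := markers σ G C x y with hM
  have hMC : M ⊆ C := e.markers_subset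
  have hM2 : 2 * δ ≤ M.card + 2 := e.le_card_markers
  have hsum : P.card + (M \ B).card + B.card ≤ C.card := by
    rw [← Finset.card_union_of_disjoint, ← Finset.card_union_of_disjoint]
    · refine Finset.card_le_card (Finset.union_subset (Finset.union_subset ?_ ?_) hBC)
      · exact hP.trans Finset.sdiff_subset
      · exact Finset.sdiff_subset.trans hMC
    · rw [Finset.disjoint_left]
      intro v hv
      rcases Finset.mem_union.1 hv with hv | hv
      · exact hPB v hv
      · exact (Finset.mem_sdiff.1 hv).2
    · rw [Finset.disjoint_left]
      intro v hv hv'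
      exact (Finset.mem_sdiff.1 (hP hv)).2 (Finset.mem_sdiff.1 hv').1
  have hsplit : (M \ B).card + (M ∩ B).card = M.card := Finset.card_sdiff_add_card_inter M B
  rcases (M ∩ B).eq_empty_or_nonempty with h0 | ⟨z, hz⟩
  · rw [h0, Finset.card_empty] at hsplit
    obtain ⟨b, hb⟩ := c.nonempty_right
    have hN : nbr G Finset.univ b ⊆ B.erase b ∪ S := by
      intro w hw
      have hw' := (mem_nbr.1 hw).2
      rcases c.mem_of_adj_right hb hw' with h | h
      · exact Finset.mem_union_left _ (Finset.mem_erase.2 ⟨hw'.ne', h⟩)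
      · exact Finset.mem_union_right _ h
    have h1 := (Finset.card_le_card hN).trans (Finset.card_union_le _ _)
    have h2 := Finset.card_erase_add_one hb
    have h3 := e.degree b
    have h4 := c.card
    omega
  · have hmark : ∀ v ∈ M ∩ B, ∃ q ∈ bifeet G C x y, σ (σ q) = v := by
      intro v hv
      obtain ⟨hvM, hvB⟩ := Finset.mem_inter.1 hv
      obtain ⟨q, hq, b, hb, hb', hbq, rfl⟩ := mem_markers.1 hvM
      obtain rfl | rfl : b = 1 ∨ b = 2 := by omega
      · exact absurd (by simpa using hvB) (hB q hq)
      · exact ⟨q, hbq rfl, by simp [pow_two]⟩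
    have hbi : ∀ q ∈ bifeet G C x y, q ∈ feet G C x y := fun q hq =>
      mem_feet.2 ⟨(mem_bifeet.1 hq).1, Or.inl (mem_bifeet.1 hq).2.1⟩
    set D := (M ∩ B).image σ.symm with hD
    have hDcard : D.card = (M ∩ B).card := Finset.card_image_of_injective _ σ.symm.injective
    have hDmem : ∀ d ∈ D, σ d ∈ M ∩ B ∧ ∃ q ∈ bifeet G C x y, d = σ q := by
      intro d hd
      obtain ⟨v, hv, rfl⟩ := Finset.mem_image.1 hd
      obtain ⟨q, hq, rfl⟩ := hmark v hv
      exact ⟨by simpa using hv, q, hq, by simp⟩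
    have hDS : D ⊆ S ∩ C := by
      intro d hd
      obtain ⟨hdB, q, hq, rfl⟩ := hDmem d hd
      have hqC := e.lc.apply_mem_iff.2 (mem_bifeet.1 hq).1
      refine Finset.mem_inter.2 ⟨?_, hqC⟩
      exact (c.mem_of_adj_right (Finset.mem_inter.1 hdB).2 (e.lc.adj _ hqC).symm).resolve_left
        (hB q (hbi q hq))
    have hne : D.Nonempty := ⟨_, Finset.mem_image_of_mem _ hz⟩
    have hzB := (Finset.mem_inter.1 hz).2
    have hN : nbr G Finset.univ z ⊆ B.erase z ∪ insert (σ.symm z) (S \ D) := by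
      intro w hw
      have hw' := (mem_nbr.1 hw).2
      rcases c.mem_of_adj_right hzB hw' with h | h
      · exact Finset.mem_union_left _ (Finset.mem_erase.2 ⟨hw'.ne', h⟩)
      · refine Finset.mem_union_right _ ?_
        by_cases hwD : w ∈ D
        · obtain ⟨-, q, hq, rfl⟩ := hDmem w hwD
          have := (e.adj_marker (hbi q hq) (Finset.mem_inter.1 hz).1 hw'.symm).1
          rw [this]
          simp
        · exact Finset.mem_insert_of_mem (Finset.mem_sdiff.2 ⟨h, hwD⟩)
    have h1 := (Finset.card_le_card hN).trans (Finset.card_union_le _ _)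
    have h1' := Finset.card_insert_le (σ.symm z) (S \ D)
    have h2 := Finset.card_erase_add_one hzB
    have h3 := e.degree z
    have h4 := c.card
    have h5 := Finset.card_sdiff_add_card_eq_card (hDS.trans Finset.inter_subset_left)
    have h6 := ho' (hne.mono hDS)
    omega

/-- The case of a minimum cut with an end of the edge on one side. -/
lemma length_of_left_mem (e : OuterEdge G σ C x y δ) (c : MinCut G S A B) (hx : x ∈ A) :
    4 * δ ≤ C.card + 2 * kappa G := by
  set M := markers σ G C x y with hM
  have h4 := e.four_le
  have hM2 : 2 * δ ≤ M.card + 2 := e.le_card_markers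
  have hPx := e.card_nbr_add_le
  have hP : nbr G C x ⊆ C \ M := fun v hv =>
    Finset.mem_sdiff.2 ⟨(mem_nbr.1 hv).1, fun h => e.not_adj_left h (mem_nbr.1 hv).2⟩
  have hPB : ∀ v ∈ nbr G C x, v ∉ B := fun v hv hvB => c.not_adj x hx v hvB (mem_nbr.1 hv).2
  have hQ : ∀ w, nbr G C w \ M ⊆ C \ M := fun w =>
    Finset.sdiff_subset_sdiff (Finset.filter_subset _ _) le_rfl
  have hQA : ∀ w ∈ B, ∀ v ∈ nbr G C w \ M, v ∉ A := fun w hw v hv hvA =>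
    c.not_adj v hvA w hw (mem_nbr.1 (Finset.mem_sdiff.1 hv).1).2.symm
  have hSC := card_inter_add_card_sdiff_le (C := C) c
  have hcount : ∀ w ∈ B, M.card + (nbr G C x).card + (nbr G C w \ M).card ≤
      C.card + (nbr G C x ∩ (nbr G C w \ M)).card ∧ nbr G C x ∩ (nbr G C w \ M) ⊆ S ∩ C :=
    fun w hw => e.card_add_card_add_card_le c hP (hQ w) hPB (hQA w hw)
  by_contra hlt
  have hyB : y ∉ B := fun h => c.not_adj x hx y h e.adj
  by_cases hBC : B ⊆ C
  · by_cases hex : ∃ p ∈ feet G C x y, σ p ∈ B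
    · obtain ⟨p, hp, hpB⟩ := hex
      have h1 := e.le_card_nbr_sdiff_of_feet hp
      rw [← hM] at h1
      have h2 : nbr G Cᶜ (σ p) ⊆ S \ C := by
        intro v hv
        obtain ⟨hvC, hv⟩ := mem_nbr.1 hv
        rw [Finset.mem_compl] at hvC
        exact Finset.mem_sdiff.2
          ⟨(c.mem_of_adj_right hpB hv).resolve_left fun h => hvC (hBC h), hvC⟩
      obtain ⟨h3, h5⟩ := hcount _ hpB
      have h2 := Finset.card_le_card h2
      have h5 := Finset.card_le_card h5
      omega
    · push Not at hex
      exact hlt (e.length_of_side c hBC hex hP hPB (o := 0) hPx (by omega) fun _ => by omega)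
  obtain ⟨w, hwB, hwC⟩ := Finset.not_subset.1 hBC
  have key : ∀ w ∈ B, w ∉ C → S ⊆ C ∧ (∀ s ∈ S, G.Adj w s ∧ s ∉ M) ∧ (∃ u ∈ M, G.Adj w u) ∧
      ∃ w', w' ∉ C ∧ G.Adj w w' := by
    intro w hwB hwC
    obtain ⟨h1, h2⟩ := hcount w hwB
    have hwx : w ≠ x := fun h => c.disj x hx (h ▸ hwB)
    have hwy : w ≠ y := fun h => hyB (h ▸ hwB)
    have h3 := e.le_card_nbr_sdiff_of_not_mem hwC hwx hwy
    rw [← hM] at h3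
    have h5 := e.outer_le_one w hwC
    have h6 := Finset.card_le_card h2
    have h7 := Finset.card_sdiff_add_card_inter (nbr G C w) M
    have h8 := (e.degree w).trans (card_nbr_univ_le C w)
    have hSeq : nbr G C x ∩ (nbr G C w \ M) = S :=
      Finset.eq_of_subset_of_card_le (h2.trans Finset.inter_subset_left) (by
        rw [c.card]
        omega)
    refine ⟨?_, ?_, ?_, ?_⟩
    · rw [← hSeq]
      exact h2.trans Finset.inter_subset_right
    · intro s hs
      rw [← hSeq] at hs
      have := Finset.mem_sdiff.1 (Finset.mem_inter.1 hs).2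
      exact ⟨(mem_nbr.1 this.1).2, this.2⟩
    · obtain ⟨u, hu⟩ := Finset.card_pos.1 (show 0 < (nbr G C w ∩ M).card by omega)
      exact ⟨u, (Finset.mem_inter.1 hu).2, (mem_nbr.1 (Finset.mem_inter.1 hu).1).2⟩
    · obtain ⟨u, hu⟩ := Finset.card_pos.1 (show 0 < (nbr G Cᶜ w).card by omega)
      exact ⟨u, by simpa using (mem_nbr.1 hu).1, (mem_nbr.1 hu).2⟩
  obtain ⟨hS, hwS, ⟨u, huM, hwu⟩, w', hw'C, hww'⟩ := key w hwB hwC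
  have hyA : y ∈ A := (c.mem_of_adj_left hx e.adj).resolve_right fun h => e.right (hS h)
  have hw'B : w' ∈ B := (c.mem_of_adj_right hwB hww').resolve_right fun h => hw'C (hS h)
  obtain ⟨-, hw'S, -, -⟩ := key w' hw'B hw'C
  have huB : u ∈ B := (c.mem_of_adj_right hwB hwu).resolve_right fun h => (hwS u h).2 huM
  obtain ⟨p, hp, b, hb, hb', hbp, rfl⟩ := mem_markers.1 huM
  have hpC := (mem_feet.1 hp).1
  have hpB : p ∉ B := by
    intro h
    rcases (mem_feet.1 hp).2 with h' | h'
    · exact c.not_adj x hx p h h'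
    · exact c.not_adj y hyA p h h'
  have h3 := e.lc.three_le
  have hσC := e.lc.apply_mem_iff.2 hpC
  have hpS : σ p ∈ B → p ∈ S := fun h =>
    (c.mem_of_adj_right h (e.lc.adj p hpC).symm).resolve_left hpB
  have hne : ∀ {r t : V}, r ∈ C → t ∉ C → r ≠ t := fun hr ht h => ht (h ▸ hr)
  have huC := e.lc.pow_mem hpC b
  have hpu : p ≠ (σ ^ b) p := (e.lc.pow_ne hpC hb (by omega)).symm
  obtain rfl | rfl : b = 1 ∨ b = 2 := by omega
  · have hwp := (hwS p (hpS (by simpa using huB))).1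
    have hpath := (PathIn.nil (G := G) (Finset.mem_singleton_self w)).link hwp.symm hwu
      (by simpa using hne hpC hwC) (by simpa using hne huC hwC) hpu
    have := e.lc.detour_le hpC hb (by omega) hpath (by
      intro z hz hzC
      simp only [Finset.mem_insert, Finset.mem_singleton] at hz
      rcases hz with h | h | rfl
      · exact Or.inl h
      · exact Or.inr h
      · exact absurd hzC hwC)
    omega
  · have hσB : σ p ∈ B := by
      have := c.mem_of_adj_right huB (w := σ p) (by
        simpa [pow_two] using (e.lc.adj _ hσC).symm)
      exact this.resolve_right fun h => (hwS _ h).2 (apply_mem_markers hp)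
    have hwp := (hw'S p (hpS hσB)).1
    have hpath := (PathIn.edge hww'.symm).link hwp.symm hwu
      (by simp [hne hpC hwC, hne hpC hw'C]) (by
        simp only [Finset.mem_insert, Finset.mem_singleton]
        rintro (h | h)
        · exact hne huC hw'C h
        · exact hne huC hwC h) hpu
    have := e.lc.detour_le hpC hb (by omega) hpath (by
      intro z hz hzC
      simp only [Finset.mem_insert, Finset.mem_singleton] at hz
      rcases hz with h | h | rfl | rfl
      · exact Or.inl h
      · exact Or.inr h
      · exact absurd hzC hw'C
      · exact absurd hzC hwC)
    omega

/-- Many vertices of `C` near the side `A` of a cut, up to a set `O` of vertices outside `C`. -/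
structure Witness (G : SimpleGraph V) (C M S A B : Finset V) (x y : V) (δ : ℕ) (P O : Finset V) :
    Prop where
  subset : P ⊆ C \ M
  not_mem : ∀ v ∈ P, v ∉ B
  le_card : δ ≤ P.card + 1 + O.card
  outer_subset : O ⊆ S \ C
  left : x ∉ O
  right : y ∉ O
  exists_adj : ∀ w ∈ O, ∃ u ∈ M, u ∈ A ∧ G.Adj w u

lemma exists_witness (e : OuterEdge G σ C x y δ) (c : MinCut G S A B)
    (hA : ∀ w ∈ A, w ∉ C → nbr G Cᶜ w = ∅) (hex : ¬ A ⊆ C ∨ ∃ p ∈ feet G C x y, σ p ∈ A) :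
    ∃ P O, Witness G C (markers σ G C x y) S A B x y δ P O := by
  have hQ : ∀ w, nbr G C w \ markers σ G C x y ⊆ C \ markers σ G C x y := fun w =>
    Finset.sdiff_subset_sdiff (Finset.filter_subset _ _) le_rfl
  have hQB : ∀ w ∈ A, ∀ v ∈ nbr G C w \ markers σ G C x y, v ∉ B := fun w hw v hv =>
    fun hvB => c.not_adj w hw v hvB (mem_nbr.1 (Finset.mem_sdiff.1 hv).1).2
  by_cases hAC : A ⊆ C
  · obtain ⟨p, hp, hpA⟩ := hex.resolve_left (not_not.2 hAC)
    have hm := apply_mem_markers (σ := σ) hp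
    refine ⟨_, _, hQ (σ p), hQB _ hpA, e.le_card_nbr_sdiff_of_feet hp, ?_, ?_, ?_, ?_⟩
    · intro v hv
      obtain ⟨hvC, hv⟩ := mem_nbr.1 hv
      rw [Finset.mem_compl] at hvC
      exact Finset.mem_sdiff.2
        ⟨(c.mem_of_adj_left hpA hv).resolve_left fun h => hvC (hAC h), hvC⟩
    · exact fun h => e.not_adj_left hm (mem_nbr.1 h).2.symm
    · exact fun h => e.not_adj_right hm (mem_nbr.1 h).2.symm
    · exact fun w hw => ⟨_, hm, hpA, (mem_nbr.1 hw).2.symm⟩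
  · obtain ⟨w, hwA, hwC⟩ := Finset.not_subset.1 hAC
    have h0 := hA w hwA hwC
    have hno : ∀ v ∉ C, ¬ G.Adj w v := fun v hv h => by
      have : v ∈ nbr G Cᶜ w := mem_nbr.2 ⟨by simpa using hv, h⟩
      simp [h0] at this
    have hwx : w ≠ x := fun h => hno y e.right (h ▸ e.adj)
    have hwy : w ≠ y := fun h => hno x e.left (h ▸ e.adj.symm)
    refine ⟨_, ∅, hQ w, hQB w hwA, ?_, by simp, by simp, by simp, by simp⟩
    have := e.le_card_nbr_sdiff_of_not_mem hwC hwx hwy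
    rwa [h0] at this

lemma length_of_witness (e : OuterEdge G σ C x y δ) (c : MinCut G S A B) (hx : x ∈ S) (hy : y ∈ S)
    {O : Finset V} (hw : Witness G C (markers σ G C x y) S A B x y δ P O) (hBC : B ⊆ C)
    (hB : ∀ p ∈ feet G C x y, σ p ∉ B) : 4 * δ ≤ C.card + 2 * kappa G := by
  have hSC := card_inter_add_card_sdiff_le (C := C) c
  have hO : O.card + 2 ≤ (S \ C).card := by
    rw [← Finset.card_pair e.adj.ne, ← Finset.card_union_of_disjoint]
    · refine Finset.card_le_card (Finset.union_subset hw.outer_subset ?_)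
      intro v hv
      simp only [Finset.mem_insert, Finset.mem_singleton] at hv
      rcases hv with rfl | rfl
      · exact Finset.mem_sdiff.2 ⟨hx, e.left⟩
      · exact Finset.mem_sdiff.2 ⟨hy, e.right⟩
    · rw [Finset.disjoint_left]
      intro v hv hv'
      simp only [Finset.mem_insert, Finset.mem_singleton] at hv'
      rcases hv' with rfl | rfl
      · exact hw.left hv
      · exact hw.right hv
  refine e.length_of_side c hBC hB hw.subset hw.not_mem hw.le_card (by omega) fun h => ?_
  have := h.card_pos
  omega

/-- The case of a minimum cut such that edges outside `C` meet none of its sides. -/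
lemma length_of_mem_cut (e : OuterEdge G σ C x y δ) (c : MinCut G S A B) (hκ : kappa G ≤ δ)
    (h : ∀ w, w ∉ C → w ∉ S → nbr G Cᶜ w = ∅) : 4 * δ ≤ C.card + 2 * kappa G := by
  have hxS : x ∈ S := by
    by_contra hx
    have := h x e.left hx
    have : y ∈ nbr G Cᶜ x := mem_nbr.2 ⟨by simpa using e.right, e.adj⟩
    simp_all
  have hyS : y ∈ S := by
    by_contra hy
    have := h y e.right hy
    have : x ∈ nbr G Cᶜ y := mem_nbr.2 ⟨by simpa using e.left, e.adj.symm⟩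
    simp_all
  have h4 := e.four_le
  have hM2 := e.le_card_markers
  have hSC := card_inter_add_card_sdiff_le (C := C) c
  have hA := fun w hw hwC => h w hwC (c.disj_left w hw)
  have hB := fun w hw hwC => h w hwC (c.disj_right w hw)
  by_cases hexA : ¬ A ⊆ C ∨ ∃ p ∈ feet G C x y, σ p ∈ A <;>
    by_cases hexB : ¬ B ⊆ C ∨ ∃ p ∈ feet G C x y, σ p ∈ B
  · obtain ⟨P, O, hP⟩ := e.exists_witness c hA hexA
    obtain ⟨Q, U, hQ⟩ := e.exists_witness c.symm hB hexB
    obtain ⟨h1, h2⟩ := e.card_add_card_add_card_le c hP.subset hQ.subset hP.not_mem hQ.not_mem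
    have h2 := Finset.card_le_card h2
    have h3 : O.card + U.card ≤ (S \ C).card := by
      rw [← Finset.card_union_of_disjoint]
      · exact Finset.card_le_card (Finset.union_subset hP.outer_subset hQ.outer_subset)
      · rw [Finset.disjoint_left]
        intro w hw hw'
        obtain ⟨u, huM, huA, hwu⟩ := hP.exists_adj w hw
        obtain ⟨v, hvM, hvB, hwv⟩ := hQ.exists_adj w hw'
        have := e.eq_of_common_nbr (Finset.mem_sdiff.1 (hP.outer_subset hw)).2
          (fun h => hP.left (h ▸ hw)) (fun h => hP.right (h ▸ hw)) huM hvM hwu hwv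
        exact c.disj u huA (this ▸ hvB)
    have := hP.le_card
    have := hQ.le_card
    omega
  · obtain ⟨P, O, hP⟩ := e.exists_witness c hA hexA
    push Not at hexB
    exact e.length_of_witness c hxS hyS hP hexB.1 hexB.2
  · obtain ⟨Q, U, hQ⟩ := e.exists_witness c.symm hB hexB
    push Not at hexA
    exact e.length_of_witness c.symm hxS hyS hQ hexA.1 hexA.2
  · push Not at hexA hexB
    have hsub : (feet G C x y).image σ ⊆ S ∩ C := by
      intro v hv
      obtain ⟨p, hp, rfl⟩ := Finset.mem_image.1 hv
      refine Finset.mem_inter.2 ⟨?_, e.lc.apply_mem_iff.2 (mem_feet.1 hp).1⟩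
      rcases c.cover (σ p) with h | h | h
      · exact absurd h (hexA.2 p hp)
      · exact absurd h (hexB.2 p hp)
      · exact h
    have h1 := Finset.card_le_card hsub
    rw [Finset.card_image_of_injective _ σ.injective] at h1
    have h2 : 2 ≤ (S \ C).card := by
      rw [← Finset.card_pair e.adj.ne]
      refine Finset.card_le_card ?_
      intro v hv
      simp only [Finset.mem_insert, Finset.mem_singleton] at hv
      rcases hv with rfl | rfl
      · exact Finset.mem_sdiff.2 ⟨hxS, e.left⟩
      · exact Finset.mem_sdiff.2 ⟨hyS, e.right⟩
    have h3 := e.card_nbr_add_le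
    have h5 : (nbr G C x).card ≤ (feet G C x y).card :=
      Finset.card_le_card Finset.subset_union_left
    omega

lemma exists_adj_left (e : OuterEdge G σ C x y δ) (hδ : 2 ≤ δ) : ∃ p ∈ C, G.Adj x p := by
  have := e.card_nbr_add_le
  obtain ⟨p, hp⟩ := Finset.card_pos.1 (show 0 < (nbr G C x).card by omega)
  exact ⟨p, mem_nbr.1 hp⟩

theorem length_le (e : OuterEdge G σ C x y δ) (hκ : kappa G ≤ δ) :
    4 * δ ≤ C.card + 2 * kappa G := by
  have h4 := e.four_le
  obtain ⟨p, hpC, hxp⟩ := e.exists_adj_left (by omega)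
  have hm : σ p ∈ markers σ G C x y := apply_mem_markers (mem_feet.2 ⟨hpC, Or.inl hxp⟩)
  obtain ⟨S, A, B, c⟩ := exists_minCut
    (fun h => e.left (h ▸ e.lc.apply_mem_iff.2 hpC) : x ≠ σ p) (e.not_adj_left hm)
  by_cases h : ∀ w, w ∉ C → w ∉ S → nbr G Cᶜ w = ∅
  · exact e.length_of_mem_cut c hκ h
  · push Not at h
    obtain ⟨w, hwC, hwS, u, hu⟩ := h
    obtain ⟨huC, hwu⟩ := mem_nbr.1 hu
    have e' : OuterEdge G σ C w u δ :=
      ⟨e.lc, hwC, by simpa using huC, hwu, e.four_le, e.degree, e.outer_le_one⟩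
    rcases c.cover w with h | h | h
    · exact e'.length_of_left_mem c h
    · exact e'.length_of_left_mem c.symm h
    · exact absurd h hwS

end OuterEdge

/-- A longest cycle which leaves an edge outside is long. -/
theorem LongestCycle.length_of_adj (h : LongestCycle G σ C) (h4 : 4 ≤ kappa G)
    (hδ : ∀ v, δ ≤ (nbr G Finset.univ v).card) (hκ : kappa G ≤ δ) (hx : x ∉ C) (hy : y ∉ C)
    (hxy : G.Adj x y) : 4 * δ ≤ C.card + 2 * kappa G := by
  by_cases hO : ∀ w, w ∉ C → (nbr G Cᶜ w).card ≤ 1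
  · exact OuterEdge.length_le ⟨h, hx, hy, hxy, h4, hδ, hO⟩ hκ
  · push Not at hO
    obtain ⟨w, hwC, hw⟩ := hO
    have hwr : w ∈ reach G Cᶜ w := self_mem_reach (by simpa using hwC)
    have hsub : insert w (nbr G Cᶜ w) ⊆ reach G Cᶜ w := by
      intro v hv
      rcases Finset.mem_insert.1 hv with rfl | hv
      · exact hwr
      · exact mem_reach_of_adj hwr (mem_nbr.1 hv).2 (mem_nbr.1 hv).1
    have h3 := Finset.card_le_card hsub
    rw [Finset.card_insert_of_notMem (by simp [mem_nbr])] at h3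
    have := h.length_of_outerPiece (outerPiece_reach G C w) h4 hδ (by omega)
    omega

end

/-- every 4-connected finite graph has a cycle of length at least
4δ - 2κ or a dominating cycle. -/
theorem stmt14 [Fintype V] (G : SimpleGraph V) [DecidableRel G.Adj]
    (h4 : 4 ≤ kappa G) :
    (∃ (x : V) (C : G.Walk x x), C.IsCycle ∧
        4 * (G.minDegree : ℤ) - 2 * kappa G ≤ C.length) ∨
      HasDominatingCycle G := by
  have hcard : ∀ v, (nbr G Finset.univ v).card = G.degree v := fun v => by
    rw [← G.card_neighborFinset_eq_degree]
    congr 1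
    ext
    simp [mem_nbr]
  obtain ⟨σ, C, h, x, D, hD, hlen, hmem⟩ :=
    exists_longestCycle (exists_isCycle_of_two_le_kappa (G := G) (by omega))
  have : Nonempty V := ⟨x⟩
  by_cases hdom : ∀ a b : V, a ∉ D.support → b ∉ D.support → ¬ G.Adj a b
  · exact Or.inr ⟨x, D, hD, hdom⟩
  · push Not at hdom
    obtain ⟨a, b, ha, hb, hab⟩ := hdom
    obtain ⟨v, hv⟩ := G.exists_minimal_degree_vertex
    have := h.length_of_adj h4 (fun u => (hcard u).symm ▸ G.minDegree_le_degree u)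
      (by rw [hv, ← hcard]; exact kappa_le_card_nbr v)
      (fun hc => ha ((hmem a).2 hc)) (fun hc => hb ((hmem b).2 hc)) hab
    exact Or.inl ⟨x, D, hD, by omega⟩
end
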